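/- arXiv:2012.11141 — 3 statements merged into one kernel-verified Lean document; each statement's English description precedes it below -/
import Mathlib

section
/- For every real a > 0 and every positive integer n, there exists a C² function φ : ℝ → ℝ satisfying φ''(r) + (2r/(r²+a²))·φ'(r) = sin(2·φ(r)) for all r ∈ ℝ, with lim_{r→−∞} φ(r) = 0 and lim_{r→+∞} φ(r) = n·π. -/
open Real Filter

/-!
The proof is by shooting from `r = 0`, where `φ 0 = nπ/2`, with slope `b` as the parameter. The
equation describes a particle in the potential `-sin²` whose energy `φ'²/2 - sin² φ` decreases for
`0 ≤ r`. Slopes whose solution exceeds `nπ` form an open set, nonempty because a large slope wins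
against the friction on `[0, 1]`, and bounded below by `0`. At the infimum `β` of this set the
solution stays below `nπ`; being a limit of solutions that do cross `nπ` it keeps a nonnegative
energy, hence is monotone and tends to a zero `mπ` of the sine with `m ≤ n`. If `m < n`, nearby
crossing solutions would linger near `mπ` for an arbitrarily long time `T`, after which their energy
is `O(1/T²)`, whereas climbing past `mπ + π/2` costs energy of order `1/T`. Reflection
`φ ↦ nπ - φ(-r)` preserves the equation and the data at `0`, which gives the limit at `-∞`.
-/

section GlobalExistence

open Set Topology NNReal

variable {E : Type*} [NormedAddCommGroup E] [NormedSpace ℝ E] {v : ℝ → E → E} {K : ℝ≥0}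

theorem isIntegralCurveOn_union {γ : ℝ → E} {s t : Set ℝ} (hs : IsClosed s) (ht : IsClosed t)
    (hγs : IsIntegralCurveOn γ v s) (hγt : IsIntegralCurveOn γ v t) :
    IsIntegralCurveOn γ v (s ∪ t) := by
  have within_of_closed {u : Set ℝ} (hu : IsClosed u) (hγu : IsIntegralCurveOn γ v u) (r : ℝ) :
      HasDerivWithinAt γ (v r (γ r)) u r := by
    by_cases hr : r ∈ u
    · exact hγu r hr
    · exact hasDerivWithinAt_iff_hasFDerivWithinAt.2
        (.of_notMem_closure (hu.closure_eq.symm ▸ hr))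
  exact fun r _ => (within_of_closed hs hγs r).union (within_of_closed ht hγt r)

theorem isIntegralCurveOn_congr {γ γ' : ℝ → E} {s : Set ℝ} (hγ : IsIntegralCurveOn γ v s)
    (h : EqOn γ' γ s) : IsIntegralCurveOn γ' v s := fun t ht => by
  rw [h ht]
  exact (hγ t ht).congr_of_mem h ht

theorem exists_isIntegralCurveOn_Icc_of_lipschitzWith [CompleteSpace E]
    (hlip : ∀ t, LipschitzWith K (v t)) (hcont : ∀ x, Continuous (v · x)) {h : ℝ≥0}
    (hKh : K * h ≤ 1 / 2) (t₀ : ℝ) (x₀ : E) :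
    ∃ γ : ℝ → E, γ t₀ = x₀ ∧ IsIntegralCurveOn γ v (Icc (t₀ - h) (t₀ + h)) := by
  obtain ⟨C, hC⟩ := isCompact_Icc.exists_bound_of_continuousOn
    (hcont x₀).continuousOn (s := Icc (t₀ - h) (t₀ + h))
  set M : ℝ≥0 := C.toNNReal
  have hpl : IsPicardLindelof v (tmin := t₀ - h) (tmax := t₀ + h)
      ⟨t₀, by constructor <;> linarith [h.coe_nonneg]⟩ x₀ (2 * M * h) 0 (2 * M) K := by
    refine ⟨fun t _ => (hlip t).lipschitzOnWith, fun x _ => (hcont x).continuousOn,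
      fun t ht x hx => ?_, by simp⟩
    calc ‖v t x‖ ≤ ‖v t x₀‖ + ‖v t x - v t x₀‖ := norm_le_norm_add_norm_sub' _ _
      _ ≤ M + K * dist x x₀ := by
        gcongr
        · exact (hC t ht).trans (le_coe_toNNReal C)
        · exact (dist_eq_norm (v t x) _).symm.trans_le ((hlip t).dist_le_mul x x₀)
      _ ≤ M + K * (2 * M * h) := by gcongr; exact hx
      _ = M + 2 * M * (K * h : ℝ≥0) := by push_cast; ring
      _ ≤ M + 2 * M * (1 / 2 : ℝ≥0) := by gcongr
      _ = (2 * M : ℝ≥0) := by push_cast; ring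
  exact hpl.exists_eq_forall_mem_Icc_hasDerivWithinAt₀

theorem exists_isIntegralCurveOn_Icc_add {h T : ℝ} (hh : 0 ≤ h) (hT : 0 ≤ T)
    (hstep : ∀ t₀ x₀, ∃ γ : ℝ → E, γ t₀ = x₀ ∧ IsIntegralCurveOn γ v (Icc (t₀ - h) (t₀ + h)))
    {γ : ℝ → E} {t₀ : ℝ} (hγ : IsIntegralCurveOn γ v (Icc (t₀ - T) (t₀ + T))) :
    ∃ γ' : ℝ → E, γ' t₀ = γ t₀ ∧
      IsIntegralCurveOn γ' v (Icc (t₀ - (T + h)) (t₀ + (T + h))) := by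
  obtain ⟨γl, hγl_eq, hγl⟩ := hstep (t₀ - T) (γ (t₀ - T))
  obtain ⟨γr, hγr_eq, hγr⟩ := hstep (t₀ + T) (γ (t₀ + T))
  let γ' : ℝ → E := fun t => if t < t₀ - T then γl t else if t ≤ t₀ + T then γ t else γr t
  have eq_left : EqOn γ' γl (Icc (t₀ - (T + h)) (t₀ - T)) := fun t ht => by
    rcases ht.2.eq_or_lt with rfl | _ <;> grind
  have eq_mid : EqOn γ' γ (Icc (t₀ - T) (t₀ + T)) := fun t ht => by grind
  have eq_right : EqOn γ' γr (Icc (t₀ + T) (t₀ + (T + h))) := fun t ht => by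
    rcases ht.1.eq_or_lt with rfl | _ <;> grind
  have cover : Icc (t₀ - (T + h)) (t₀ + (T + h)) =
      Icc (t₀ - (T + h)) (t₀ - T) ∪ Icc (t₀ - T) (t₀ + T) ∪ Icc (t₀ + T) (t₀ + (T + h)) := by
    rw [Icc_union_Icc_eq_Icc, Icc_union_Icc_eq_Icc] <;> linarith
  refine ⟨γ', eq_mid ⟨by linarith, by linarith⟩, cover ▸ ?_⟩
  have curve_left := isIntegralCurveOn_congr
    (hγl.mono (Icc_subset_Icc (by linarith) (by linarith))) eq_left
  have curve_right := isIntegralCurveOn_congr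
    (hγr.mono (Icc_subset_Icc (by linarith) (by linarith))) eq_right
  exact isIntegralCurveOn_union (isClosed_Icc.union isClosed_Icc) isClosed_Icc
    (isIntegralCurveOn_union isClosed_Icc isClosed_Icc curve_left
      (isIntegralCurveOn_congr hγ eq_mid)) curve_right

theorem exists_isIntegralCurve_of_forall_Ioo (hlip : ∀ t, LipschitzWith K (v t)) {t₀ : ℝ} {x₀ : E}
    (h : ∀ T : ℝ, ∃ γ : ℝ → E, γ t₀ = x₀ ∧ IsIntegralCurveOn γ v (Ioo (t₀ - T) (t₀ + T))) :
    ∃ γ : ℝ → E, γ t₀ = x₀ ∧ IsIntegralCurve γ v := by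
  choose γ hγ₀ hγ using h
  have deriv_at {T t : ℝ} (ht : t ∈ Ioo (t₀ - T) (t₀ + T)) : HasDerivAt (γ T) (v t (γ T t)) t :=
    (hγ T t ht).hasDerivAt (isOpen_Ioo.mem_nhds ht)
  have eqOn {T T' : ℝ} (hT : 0 < T) (hTT' : T ≤ T') :
      EqOn (γ T) (γ T') (Ioo (t₀ - T) (t₀ + T)) :=
    ODE_solution_unique_of_mem_Ioo (v := v) (s := fun _ => univ) (t₀ := t₀)
      (fun t _ => (hlip t).lipschitzOnWith) (by constructor <;> linarith)
      (fun t ht => ⟨deriv_at ht, mem_univ _⟩)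
      (fun t ht => ⟨deriv_at (Ioo_subset_Ioo (by linarith) (by linarith) ht), mem_univ _⟩)
      (by rw [hγ₀, hγ₀])
  have mem_of_lt {T t : ℝ} (h : |t - t₀| < T) : t ∈ Ioo (t₀ - T) (t₀ + T) := by
    constructor <;> linarith [abs_lt.1 h]
  refine ⟨fun t => γ (|t - t₀| + 1) t, by simp [hγ₀], fun t => ?_⟩
  have htT : t ∈ Ioo (t₀ - (|t - t₀| + 1)) (t₀ + (|t - t₀| + 1)) := mem_of_lt (by linarith)
  have near : (fun s => γ (|s - t₀| + 1) s) =ᶠ[𝓝 t] γ (|t - t₀| + 1) := by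
    filter_upwards [isOpen_Ioo.mem_nhds htT] with s hs
    rcases le_total (|s - t₀| + 1) (|t - t₀| + 1) with hle | hle
    · exact eqOn (by positivity) hle (mem_of_lt (by linarith))
    · exact (eqOn (by positivity) hle hs).symm
  exact (deriv_at htT).congr_of_eventuallyEq near

theorem exists_isIntegralCurve_of_lipschitzWith [CompleteSpace E]
    (hlip : ∀ t, LipschitzWith K (v t)) (hcont : ∀ x, Continuous (v · x)) (t₀ : ℝ) (x₀ : E) :
    ∃ γ : ℝ → E, γ t₀ = x₀ ∧ IsIntegralCurve γ v := by
  let h : ℝ≥0 := (2 * (K + 1))⁻¹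
  have hh : 0 < (h : ℝ) := by positivity
  have hKh : K * h ≤ 1 / 2 := by
    rw [← div_eq_mul_inv, div_le_div_iff₀ (by positivity) two_pos]
    linarith [zero_le_one (α := ℝ≥0)]
  have on_Icc (n : ℕ) :
      ∃ γ : ℝ → E, γ t₀ = x₀ ∧ IsIntegralCurveOn γ v (Icc (t₀ - n * h) (t₀ + n * h)) := by
    induction n with
    | zero => exact ⟨fun _ => x₀, rfl, by
        simp [IsIntegralCurveOn, hasDerivWithinAt_iff_hasFDerivWithinAt,
          HasFDerivWithinAt.of_subsingleton]⟩
    | succ n ih =>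
      obtain ⟨γ, hγ₀, hγ⟩ := ih
      obtain ⟨γ', hγ'₀, hγ'⟩ := exists_isIntegralCurveOn_Icc_add hh.le (by positivity)
        (exists_isIntegralCurveOn_Icc_of_lipschitzWith hlip hcont hKh) hγ
      exact ⟨γ', hγ'₀.trans hγ₀, by convert hγ' using 2 <;> push_cast <;> ring⟩
  refine exists_isIntegralCurve_of_forall_Ioo hlip fun T => ?_
  obtain ⟨n, hn⟩ := exists_nat_gt (T / h)
  have hTn : T < n * h := (div_lt_iff₀ hh).1 hn
  obtain ⟨γ, hγ₀, hγ⟩ := on_Icc n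
  exact ⟨γ, hγ₀, hγ.mono fun t ht => ⟨by linarith [ht.1], by linarith [ht.2]⟩⟩

end GlobalExistence

section LimitsAndInfima

open Set Topology

theorem csInf_notMem_of_isOpen {α : Type*} [ConditionallyCompleteLinearOrder α] [DenselyOrdered α]
    [NoMinOrder α] [TopologicalSpace α] [OrderTopology α] {s : Set α} (hs : IsOpen s)
    (hbdd : BddBelow s) : sInf s ∉ s := fun hmem => by
  obtain ⟨b, hlt, hb⟩ := Eventually.exists_lt (hs.mem_nhds hmem)
  exact (csInf_le hbdd hb).not_gt hlt

theorem exists_tendsto_atTop_of_monotoneOn_Ici {α β : Type*} [LinearOrder α]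
    [ConditionallyCompleteLinearOrder β] [TopologicalSpace β] [OrderTopology β] {f : α → β} {c : α}
    (hf : MonotoneOn f (Ici c)) (hbdd : BddAbove (f '' Ici c)) :
    ∃ L, Tendsto f atTop (𝓝 L) ∧ ∀ x ∈ Ici c, f x ≤ L := by
  have hmono : Monotone fun x => f (max c x) := fun x y hxy =>
    hf (le_max_left c x) (le_max_left c y) (max_le_max_left c hxy)
  have hrange : BddAbove (range fun x => f (max c x)) :=
    hbdd.mono (range_subset_iff.2 fun x => mem_image_of_mem f (le_max_left c x))
  refine ⟨⨆ x, f (max c x), (tendsto_atTop_ciSup hmono hrange).congr' ?_, fun x hx => ?_⟩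
  · filter_upwards [eventually_ge_atTop c] with x hx using by rw [max_eq_right hx]
  · simpa only [max_eq_right hx.out] using le_ciSup hrange x

theorem exists_seq_tendsto_deriv_zero {f : ℝ → ℝ} (hf : Differentiable ℝ f) {L : ℝ}
    (hL : Tendsto f atTop (𝓝 L)) : ∃ u : ℕ → ℝ, Tendsto u atTop atTop ∧
      Tendsto (fun k => deriv f (u k)) atTop (𝓝 0) := by
  have mean_value (k : ℕ) : ∃ ξ ∈ Ioo (k : ℝ) (k + 1), deriv f ξ = f (k + 1) - f k := by
    simpa using exists_deriv_eq_slope f (lt_add_one (k : ℝ)) hf.continuous.continuousOn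
      hf.differentiableOn
  choose u hu hderiv using mean_value
  have hk : Tendsto (fun k : ℕ => (k : ℝ)) atTop atTop := tendsto_natCast_atTop_atTop
  refine ⟨u, tendsto_atTop_mono (fun k => (hu k).1.le) hk, ?_⟩
  simpa [hderiv, Function.comp_def] using
    (hL.comp (tendsto_atTop_add_const_right _ 1 hk)).sub (hL.comp hk)

end LimitsAndInfima

section WormholeEquation

variable {a : ℝ} {φ χ : ℝ → ℝ}

/-- The vector field on the phase plane of pairs `(φ, φ')` whose integral curves are the solutions
of the wormhole kink equation, as a function of the time `t` and the point `x`. -/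
noncomputable def wormholeField (a t : ℝ) (x : ℝ × ℝ) : ℝ × ℝ :=
  (x.2, sin (2 * x.1) - 2 * t / (t ^ 2 + a ^ 2) * x.2)

theorem abs_two_mul_div_sq_add_sq_le (ha : 0 < a) (t : ℝ) : |2 * t / (t ^ 2 + a ^ 2)| ≤ 1 / a := by
  have hden : 0 < t ^ 2 + a ^ 2 := by positivity
  rw [abs_div, abs_of_pos hden, div_le_div_iff₀ hden ha, abs_mul, abs_two]
  nlinarith [sq_nonneg (|t| - a), sq_abs t]

theorem lipschitzWith_wormholeField (ha : 0 < a) (t : ℝ) :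
    LipschitzWith (2 + 1 / a).toNNReal (wormholeField a t) := by
  refine .of_dist_le_mul fun x y => ?_
  rw [coe_toNNReal _ (by positivity), Prod.dist_eq]
  have hfst : |x.1 - y.1| ≤ dist x y := le_max_left _ _
  have hsnd : |x.2 - y.2| ≤ dist x y := le_max_right _ _
  refine max_le ?_ ?_
  · calc |x.2 - y.2| ≤ 1 * dist x y := by simpa using hsnd
      _ ≤ (2 + 1 / a) * dist x y := by
        gcongr
        linarith [one_div_pos.2 ha]
  · calc |sin (2 * x.1) - 2 * t / (t ^ 2 + a ^ 2) * x.2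
          - (sin (2 * y.1) - 2 * t / (t ^ 2 + a ^ 2) * y.2)|
        = |(sin (2 * x.1) - sin (2 * y.1)) - 2 * t / (t ^ 2 + a ^ 2) * (x.2 - y.2)| := by ring_nf
      _ ≤ |2 * x.1 - 2 * y.1| + |2 * t / (t ^ 2 + a ^ 2)| * |x.2 - y.2| := by
        rw [← abs_mul]
        exact (norm_sub_le (sin (2 * x.1) - sin (2 * y.1)) _).trans
          (add_le_add_left (abs_sin_sub_sin_le _ _) _)
      _ ≤ 2 * dist x y + 1 / a * dist x y := by
        rw [← mul_sub, abs_mul, abs_two]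
        gcongr
        exact abs_two_mul_div_sq_add_sq_le ha t
      _ = (2 + 1 / a) * dist x y := by ring

theorem continuous_wormholeField (ha : 0 < a) (x : ℝ × ℝ) :
    Continuous fun t => wormholeField a t x := by
  have hden (t : ℝ) : t ^ 2 + a ^ 2 ≠ 0 := by positivity
  unfold wormholeField
  fun_prop (disch := exact hden _)

/-- `φ` solves the wormhole kink equation `φ'' + 2r/(r² + a²) φ' = sin (2φ)` on the whole line. -/
structure IsWormholeSolution (a : ℝ) (φ : ℝ → ℝ) : Prop where
  differentiable : Differentiable ℝ φ
  hasDerivAt_deriv (r : ℝ) :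
    HasDerivAt (deriv φ) (sin (2 * φ r) - 2 * r / (r ^ 2 + a ^ 2) * deriv φ r) r

/-- The trajectory `r ↦ (φ r, φ' r)` of `φ` in the phase plane. -/
noncomputable def phaseCurve (φ : ℝ → ℝ) (r : ℝ) : ℝ × ℝ := (φ r, deriv φ r)

/-- The mechanical energy `φ'² / 2 - sin² φ`; the term `2r/(r² + a²) φ'` of the equation is a
friction for `0 ≤ r`. -/
noncomputable def energy (φ : ℝ → ℝ) (r : ℝ) : ℝ := deriv φ r ^ 2 / 2 - sin (φ r) ^ 2

namespace IsWormholeSolution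

theorem hasDerivAt (hφ : IsWormholeSolution a φ) (r : ℝ) : HasDerivAt φ (deriv φ r) r :=
  (hφ.differentiable r).hasDerivAt

theorem differentiable_deriv (hφ : IsWormholeSolution a φ) : Differentiable ℝ (deriv φ) :=
  fun r => (hφ.hasDerivAt_deriv r).differentiableAt

theorem isIntegralCurve_phaseCurve (hφ : IsWormholeSolution a φ) :
    IsIntegralCurve (phaseCurve φ) (wormholeField a) :=
  fun r => (hφ.hasDerivAt r).prodMk (hφ.hasDerivAt_deriv r)

theorem contDiff_two (ha : 0 < a) (hφ : IsWormholeSolution a φ) : ContDiff ℝ 2 φ := by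
  have hden (r : ℝ) : r ^ 2 + a ^ 2 ≠ 0 := by positivity
  have deriv_deriv : deriv (deriv φ) = fun r =>
      sin (2 * φ r) - 2 * r / (r ^ 2 + a ^ 2) * deriv φ r :=
    funext fun r => (hφ.hasDerivAt_deriv r).deriv
  have hφ_cont := hφ.differentiable.continuous
  have hφ'_cont := hφ.differentiable_deriv.continuous
  rw [show (2 : WithTop ℕ∞) = 1 + 1 from rfl, contDiff_succ_iff_deriv, contDiff_one_iff_deriv,
    deriv_deriv]
  refine ⟨hφ.differentiable, by simp, hφ.differentiable_deriv, ?_⟩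
  fun_prop (disch := exact hden _)

theorem dist_phaseCurve_le (ha : 0 < a) (hφ : IsWormholeSolution a φ)
    (hχ : IsWormholeSolution a χ) {r : ℝ} (hr : 0 ≤ r) :
    dist (phaseCurve φ r) (phaseCurve χ r) ≤
      dist (phaseCurve φ 0) (phaseCurve χ 0) * exp ((2 + 1 / a) * r) := by
  have hφ_curve := hφ.isIntegralCurve_phaseCurve
  have hχ_curve := hχ.isIntegralCurve_phaseCurve
  have := dist_le_of_trajectories_ODE (v := wormholeField a) (a := 0) (b := r)
    (lipschitzWith_wormholeField ha) hφ_curve.continuous.continuousOn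
    (fun t _ => (hφ_curve t).hasDerivWithinAt) hχ_curve.continuous.continuousOn
    (fun t _ => (hχ_curve t).hasDerivWithinAt) le_rfl r ⟨hr, le_rfl⟩
  rwa [coe_toNNReal _ (by positivity), sub_zero] at this

theorem eq_of_phaseCurve_eq (ha : 0 < a) (hφ : IsWormholeSolution a φ)
    (hχ : IsWormholeSolution a χ) {s : ℝ} (h : phaseCurve φ s = phaseCurve χ s) : φ = χ := by
  have := ODE_solution_unique_univ (v := wormholeField a) (s := fun _ => Set.univ)
    (fun t => (lipschitzWith_wormholeField ha t).lipschitzOnWith)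
    (fun t => ⟨hφ.isIntegralCurve_phaseCurve t, Set.mem_univ _⟩)
    (fun t => ⟨hχ.isIntegralCurve_phaseCurve t, Set.mem_univ _⟩) h
  exact funext fun r => congrArg Prod.fst (congrFun this r)

theorem const {c : ℝ} (hc : sin (2 * c) = 0) : IsWormholeSolution a fun _ => c where
  differentiable := differentiable_const c
  hasDerivAt_deriv r := by simpa [hc] using hasDerivAt_const r (0 : ℝ)

theorem eq_const_of_deriv_eq_zero (ha : 0 < a) (hφ : IsWormholeSolution a φ) {s : ℝ}
    (hs : deriv φ s = 0) (hsin : sin (φ s) = 0) : φ = fun _ => φ s :=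
  hφ.eq_of_phaseCurve_eq ha (const (by rw [sin_two_mul, hsin, mul_zero, zero_mul])) (s := s)
    (by simp [phaseCurve, hs])

theorem nat_mul_pi_sub_comp_neg (hφ : IsWormholeSolution a φ) (n : ℕ) :
    IsWormholeSolution a fun r => n * π - φ (-r) := by
  have deriv_eq : deriv (fun r => n * π - φ (-r)) = fun r => deriv φ (-r) := by
    funext r
    rw [deriv_const_sub, deriv_comp_neg, neg_neg]
  refine ⟨hφ.differentiable.comp differentiable_neg |>.const_sub _, fun r => ?_⟩
  have sin_reflect : sin (2 * (n * π - φ (-r))) = -sin (2 * φ (-r)) := by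
    rw [show 2 * (n * π - φ (-r)) = n * (2 * π) - 2 * φ (-r) by ring, sin_nat_mul_two_pi_sub]
  rw [deriv_eq]
  refine ((hφ.hasDerivAt_deriv (-r)).scomp r (hasDerivAt_neg r)).congr_deriv ?_
  rw [sin_reflect, smul_eq_mul]
  ring

theorem eq_nat_mul_pi_sub_comp_neg (ha : 0 < a) (hφ : IsWormholeSolution a φ) {n : ℕ}
    (h₀ : φ 0 = n * π / 2) : φ = fun r => n * π - φ (-r) :=
  hφ.eq_of_phaseCurve_eq ha (hφ.nat_mul_pi_sub_comp_neg n) (s := 0) <| by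
    simp only [phaseCurve, deriv_const_sub, deriv_comp_neg, neg_neg, neg_zero, h₀]
    ring_nf

theorem hasDerivAt_energy (hφ : IsWormholeSolution a φ) (r : ℝ) :
    HasDerivAt (energy φ) (-(2 * r / (r ^ 2 + a ^ 2)) * deriv φ r ^ 2) r := by
  refine (((hφ.hasDerivAt_deriv r).pow 2).div_const 2 |>.sub
    ((hφ.hasDerivAt r).sin.pow 2)).congr_deriv ?_
  rw [sin_two_mul]
  push_cast
  ring

theorem energy_antitoneOn (hφ : IsWormholeSolution a φ) : AntitoneOn (energy φ) (Set.Ici 0) := by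
  have hdiff : Differentiable ℝ (energy φ) := fun r => (hφ.hasDerivAt_energy r).differentiableAt
  refine antitoneOn_of_deriv_nonpos (convex_Ici 0) hdiff.continuous.continuousOn
    hdiff.differentiableOn fun r hr => ?_
  rw [interior_Ici] at hr
  have hr : 0 < r := hr
  rw [(hφ.hasDerivAt_energy r).deriv, neg_mul, neg_nonpos]
  positivity

end IsWormholeSolution

theorem exists_isWormholeSolution (ha : 0 < a) (c b : ℝ) :
    ∃ φ, IsWormholeSolution a φ ∧ φ 0 = c ∧ deriv φ 0 = b := by
  obtain ⟨γ, hγ₀, hγ⟩ := exists_isIntegralCurve_of_lipschitzWith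
    (lipschitzWith_wormholeField ha) (continuous_wormholeField ha) 0 (c, b)
  have hasDerivAt_fst (r : ℝ) : HasDerivAt (fun r => (γ r).1) (γ r).2 r := (hγ r).fst
  have hasDerivAt_snd (r : ℝ) : HasDerivAt (fun r => (γ r).2) (wormholeField a r (γ r)).2 r :=
    (hγ r).snd
  have hderiv : deriv (fun r => (γ r).1) = fun r => (γ r).2 :=
    funext fun r => (hasDerivAt_fst r).deriv
  refine ⟨fun r => (γ r).1, ⟨fun r => (hasDerivAt_fst r).differentiableAt, fun r => ?_⟩,
    by simp [hγ₀], by simp [hderiv, hγ₀]⟩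
  rw [hderiv]
  exact hasDerivAt_snd r

end WormholeEquation

section EnergyMethod

open Set Topology

variable {a s T T' : ℝ} {n j : ℕ} {φ : ℝ → ℝ}

theorem one_le_deriv_of_energy_nonneg {r : ℝ} (henergy : 0 ≤ energy φ r) (hderiv : 0 ≤ deriv φ r)
    (hr : φ r ∈ Icc (j * π + π / 4) (j * π + 3 * π / 4)) : 1 ≤ deriv φ r := by
  have hcos : cos (2 * φ r) ≤ 0 := by
    rw [← cos_sub_nat_mul_two_pi _ j]
    exact cos_nonpos_of_pi_div_two_le_of_le (by linarith [hr.1]) (by linarith [hr.2])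
  rw [cos_two_mul'] at hcos
  unfold energy at henergy
  nlinarith [sin_sq_add_cos_sq (φ r)]

theorem sin_eq_zero_of_tendsto_of_energy_nonneg {L : ℝ} (hφ : Differentiable ℝ φ)
    (henergy : ∀ r, 0 ≤ r → 0 ≤ energy φ r) (hL : Tendsto φ atTop (𝓝 L)) : sin L = 0 := by
  obtain ⟨u, hu, hderiv⟩ := exists_seq_tendsto_deriv_zero hφ hL
  have hlim : Tendsto (fun k => energy φ (u k)) atTop (𝓝 (0 ^ 2 / 2 - sin L ^ 2)) :=
    ((hderiv.pow 2).div_const 2).sub (((continuous_sin.tendsto L).comp (hL.comp hu)).pow 2)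
  have : 0 ≤ (0 : ℝ) ^ 2 / 2 - sin L ^ 2 := ge_of_tendsto hlim <|
    (hu.eventually_ge_atTop 0).mono fun k hk => henergy (u k) hk
  exact pow_eq_zero_iff two_ne_zero |>.1 (by linarith [sq_nonneg (sin L)])

namespace IsWormholeSolution

theorem deriv_nonneg_of_energy_nonneg (ha : 0 < a)
    (hφ : IsWormholeSolution a φ) (h₀ : 0 ≤ deriv φ 0) (henergy : ∀ r, 0 ≤ r → 0 ≤ energy φ r)
    {r : ℝ} (hr : 0 ≤ r) : 0 ≤ deriv φ r := by
  by_contra! hneg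
  obtain ⟨t, ht, hderiv⟩ := intermediate_value_Icc' hr
    hφ.differentiable_deriv.continuous.continuousOn ⟨hneg.le, h₀⟩
  have hsin : sin (φ t) = 0 := by
    have := henergy t ht.1
    rw [energy, hderiv] at this
    exact pow_eq_zero_iff two_ne_zero |>.1 (by linarith [sq_nonneg (sin (φ t))])
  have hconst := hφ.eq_const_of_deriv_eq_zero ha hderiv hsin
  rw [hconst, deriv_const] at hneg
  exact hneg.false

theorem energy_pos_of_crossing (ha : 0 < a) (hφ : IsWormholeSolution a φ) (h₀ : φ 0 < n * π)
    (hs : φ s = n * π) {r : ℝ} (hr : r ∈ Icc 0 s) : 0 < energy φ r := by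
  have hsin : sin (φ s) = 0 := by rw [hs, sin_nat_mul_pi]
  have hderiv : deriv φ s ≠ 0 := fun h =>
    (h₀.trans_eq hs.symm).ne (congrFun (hφ.eq_const_of_deriv_eq_zero ha h hsin) 0)
  calc 0 < deriv φ s ^ 2 / 2 := by positivity
    _ = energy φ s := by simp [energy, hsin]
    _ ≤ energy φ r := hφ.energy_antitoneOn hr.1 (hr.1.trans hr.2) hr.2

theorem deriv_pos_of_crossing (ha : 0 < a) (hφ : IsWormholeSolution a φ) (h₀ : φ 0 < n * π)
    (hs : φ s = n * π) {r : ℝ} (hr : r ∈ Icc 0 s) : 0 < deriv φ r := by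
  have hs_pos : 0 < s := (hr.1.trans hr.2).lt_of_ne (by rintro rfl; exact h₀.ne hs)
  have deriv_ne_zero (t : ℝ) (ht : t ∈ Icc 0 s) : deriv φ t ≠ 0 := fun h => by
    have := hφ.energy_pos_of_crossing ha h₀ hs ht
    rw [energy, h] at this
    linarith [sq_nonneg (sin (φ t))]
  refine (hasDerivWithinAt_forall_lt_or_forall_gt_of_forall_ne (convex_Icc 0 s)
    (fun t _ => (hφ.hasDerivAt t).hasDerivWithinAt) deriv_ne_zero).resolve_left
    (fun deriv_neg => ?_) r hr
  have := strictAntiOn_of_deriv_neg (convex_Icc 0 s) hφ.differentiable.continuous.continuousOn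
    (fun t ht => deriv_neg t (interior_subset ht)) (left_mem_Icc.2 hs_pos.le)
    (right_mem_Icc.2 hs_pos.le) hs_pos
  linarith

theorem strictMonoOn_of_crossing (ha : 0 < a) (hφ : IsWormholeSolution a φ) (h₀ : φ 0 < n * π)
    (hs : φ s = n * π) : StrictMonoOn φ (Icc 0 s) :=
  strictMonoOn_of_deriv_pos (convex_Icc 0 s) hφ.differentiable.continuous.continuousOn
    fun _ hr => hφ.deriv_pos_of_crossing ha h₀ hs (interior_subset hr)

theorem energy_le_sq_slope (hφ : IsWormholeSolution a φ) (hT : 0 < T) :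
    energy φ T ≤ ((φ T - φ 0) / T) ^ 2 / 2 := by
  obtain ⟨ξ, hξ, hslope⟩ := exists_deriv_eq_slope φ hT hφ.differentiable.continuous.continuousOn
    hφ.differentiable.differentiableOn
  calc energy φ T ≤ energy φ ξ := hφ.energy_antitoneOn hξ.1.le hT.le hξ.2.le
    _ ≤ deriv φ ξ ^ 2 / 2 := sub_le_self _ (sq_nonneg _)
    _ = ((φ T - φ 0) / T) ^ 2 / 2 := by rw [hslope, sub_zero]

theorem mul_sub_le_energy_sub (ha : 0 < a) (hφ : IsWormholeSolution a φ) (haT : a ≤ T)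
    (hT : 2 ≤ T) (hTT' : T' ∈ Icc T (T + 2)) (hderiv : ∀ r ∈ Icc T T', 1 ≤ deriv φ r) :
    2 / (5 * T) * (φ T' - φ T) ≤ energy φ T - energy φ T' := by
  have hasDerivAt_sum (r : ℝ) := (hφ.hasDerivAt_energy r).add
    ((hφ.hasDerivAt r).const_mul (2 / (5 * T)))
  have hdiff : Differentiable ℝ fun r => energy φ r + 2 / (5 * T) * φ r :=
    fun r => (hasDerivAt_sum r).differentiableAt
  have drag_ge {r : ℝ} (hr : r ∈ Icc T T') : 2 / (5 * T) ≤ 2 * r / (r ^ 2 + a ^ 2) := by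
    have hr_pos : 0 < r := by linarith [hr.1]
    rw [div_le_div_iff₀ (by positivity) (by positivity)]
    have hr_le : r ≤ 2 * T := by linarith [hr.2, hTT'.2]
    have : a ^ 2 ≤ T * r := by nlinarith [hr.1]
    nlinarith
  have anti : AntitoneOn (fun r => energy φ r + 2 / (5 * T) * φ r) (Icc T T') := by
    refine antitoneOn_of_deriv_nonpos (convex_Icc T T') hdiff.continuous.continuousOn
      hdiff.differentiableOn fun r hr => ?_
    have hr := interior_subset hr
    have hderiv_le : deriv φ r ≤ deriv φ r ^ 2 := le_self_pow₀ (hderiv r hr) two_ne_zero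
    calc deriv (fun r => energy φ r + 2 / (5 * T) * φ r) r
        = -(2 * r / (r ^ 2 + a ^ 2)) * deriv φ r ^ 2 + 2 / (5 * T) * deriv φ r :=
          (hasDerivAt_sum r).deriv
      _ ≤ -(2 / (5 * T)) * deriv φ r ^ 2 + 2 / (5 * T) * deriv φ r ^ 2 :=
        add_le_add (mul_le_mul_of_nonneg_right (neg_le_neg (drag_ge hr)) (sq_nonneg _)) (by gcongr)
      _ = 0 := by ring
  linarith [anti (left_mem_Icc.2 hTT'.1) (right_mem_Icc.2 hTT'.1) hTT'.1]

theorem div_le_energy_of_crossing (ha : 0 < a) (hφ : IsWormholeSolution a φ) (h₀ : φ 0 < n * π)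
    (hs : φ s = n * π) (hj : j < n) (haT : a ≤ T) (hT : 2 ≤ T) (hTs : T ≤ s)
    (hφT : φ T = j * π + π / 4) : π / (5 * T) ≤ energy φ T := by
  have hcont := hφ.differentiable.continuous
  have hjn : (j + 1) * π ≤ n * π := by gcongr; exact_mod_cast hj
  obtain ⟨T', ⟨hTT', hT's⟩, hφT'⟩ : j * π + 3 * π / 4 ∈ φ '' Icc T s :=
    intermediate_value_Icc hTs hcont.continuousOn
      ⟨by rw [hφT]; linarith [pi_pos], by rw [hs]; linarith [pi_pos]⟩
  have mem_crossing {r : ℝ} (hr : r ∈ Icc T T') : r ∈ Icc 0 s :=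
    ⟨by linarith [hr.1], hr.2.trans hT's⟩
  have hmono := (hφ.strictMonoOn_of_crossing ha h₀ hs).monotoneOn
  have one_le_deriv (r : ℝ) (hr : r ∈ Icc T T') : 1 ≤ deriv φ r :=
    one_le_deriv_of_energy_nonneg (hφ.energy_pos_of_crossing ha h₀ hs (mem_crossing hr)).le
      (hφ.deriv_pos_of_crossing ha h₀ hs (mem_crossing hr)).le
      ⟨hφT ▸ hmono (mem_crossing (left_mem_Icc.2 hTT')) (mem_crossing hr) hr.1,
        hφT' ▸ hmono (mem_crossing hr) (mem_crossing (right_mem_Icc.2 hTT')) hr.2⟩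
  have hT'_le : T' ≤ T + 2 := by
    have := (convex_Icc T T').mul_sub_le_image_sub_of_le_deriv hcont.continuousOn
      hφ.differentiable.differentiableOn (fun r hr => one_le_deriv r (interior_subset hr))
      T (left_mem_Icc.2 hTT') T' (right_mem_Icc.2 hTT') hTT'
    linarith [pi_lt_four]
  have hloss := hφ.mul_sub_le_energy_sub ha haT hT ⟨hTT', hT'_le⟩ one_le_deriv
  have hend := hφ.energy_pos_of_crossing ha h₀ hs (mem_crossing (right_mem_Icc.2 hTT'))
  calc π / (5 * T) = 2 / (5 * T) * (φ T' - φ T) := by rw [hφT, hφT']; ring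
    _ ≤ energy φ T - energy φ T' := hloss
    _ ≤ energy φ T := by linarith

-- If `φ` were still below the level at time `T ≥ 2 + a + 8n²`, its energy there would be `O(1/T²)`,
-- but the climb from `jπ + π/4` to `jπ + 3π/4` dissipates an amount of order `1/T`.
theorem exists_early_passage (ha : 0 < a) (hφ : IsWormholeSolution a φ)
    (h₀ : φ 0 ∈ Ico 0 (n * π)) (hs₀ : 0 ≤ s) (hs : φ s = n * π) (hj : j < n) :
    ∃ r ∈ Icc 0 (2 + a + 8 * n ^ 2 : ℝ), j * π + π / 4 ≤ φ r := by
  by_contra! hlt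
  have hjn : (j + 1) * π ≤ n * π := by gcongr; exact_mod_cast hj
  obtain ⟨T, ⟨hT₀, hTs⟩, hφT⟩ : j * π + π / 4 ∈ φ '' Icc 0 s :=
    intermediate_value_Icc hs₀ hφ.differentiable.continuous.continuousOn
      ⟨(hlt 0 ⟨le_rfl, by positivity⟩).le, by rw [hs]; linarith [pi_pos]⟩
  have hT_gt : 2 + a + 8 * n ^ 2 < T := by
    by_contra! hle
    exact (hlt T ⟨hT₀, hle⟩).ne hφT
  have hn : 0 ≤ (n : ℝ) ^ 2 := by positivity
  have hT_pos : 0 < T := by linarith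
  have hlower := hφ.div_le_energy_of_crossing ha h₀.2 hs hj (by linarith) (by linarith) hTs hφT
  have hupper : energy φ T ≤ (n * π / T) ^ 2 / 2 := by
    refine (hφ.energy_le_sq_slope hT_pos).trans ?_
    have := (hφ.strictMonoOn_of_crossing ha h₀.2 hs).monotoneOn (left_mem_Icc.2 hs₀)
      ⟨hT₀, hTs⟩ hT₀
    gcongr
    linarith [h₀.1, pi_pos]
  have : π / T ^ 2 * (T / 5) ≤ π / T ^ 2 * (n ^ 2 * π / 2) := by
    calc π / T ^ 2 * (T / 5) = π / (5 * T) := by field_simp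
      _ ≤ (n * π / T) ^ 2 / 2 := hlower.trans hupper
      _ = π / T ^ 2 * (n ^ 2 * π / 2) := by ring
  have := le_of_mul_le_mul_left this (by positivity)
  nlinarith [pi_lt_d2]

-- `r² + a²` is the integrating factor of the friction term.
theorem hasDerivAt_weighted_deriv (ha : 0 < a) (hφ : IsWormholeSolution a φ) (r : ℝ) :
    HasDerivAt (fun r => (r ^ 2 + a ^ 2) * deriv φ r) ((r ^ 2 + a ^ 2) * sin (2 * φ r)) r := by
  refine (((hasDerivAt_pow 2 r).add_const (a ^ 2)).mul (hφ.hasDerivAt_deriv r)).congr_deriv ?_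
  have : r ^ 2 + a ^ 2 ≠ 0 := by positivity
  field_simp
  ring

theorem monotoneOn_weighted_deriv_add (ha : 0 < a) (hφ : IsWormholeSolution a φ) :
    MonotoneOn (fun r => (r ^ 2 + a ^ 2) * deriv φ r + (1 + a ^ 2) * r) (Icc 0 1) := by
  have hderiv (r : ℝ) := (hφ.hasDerivAt_weighted_deriv ha r).add
    ((hasDerivAt_id r).const_mul (1 + a ^ 2))
  refine monotoneOn_of_hasDerivWithinAt_nonneg (convex_Icc 0 1)
    (fun r _ => (hderiv r).continuousAt.continuousWithinAt)
    (fun r _ => (hderiv r).hasDerivWithinAt) fun r hr => ?_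
  have hr := interior_subset hr
  have : r ^ 2 ≤ 1 := pow_le_one₀ hr.1 hr.2
  nlinarith [neg_one_le_sin (2 * φ r), sq_nonneg r, sq_nonneg a]

theorem lt_apply_one_of_deriv_zero_eq (ha : 0 < a) (hφ : IsWormholeSolution a φ) (h₀ : 0 ≤ φ 0)
    {M : ℝ} (hM : 0 ≤ M) (hslope : deriv φ 0 = (1 + a ^ 2) * (M + 1) / a ^ 2) : M < φ 1 := by
  obtain ⟨ξ, hξ, hmvt⟩ := exists_deriv_eq_slope φ zero_lt_one
    hφ.differentiable.continuous.continuousOn hφ.differentiable.differentiableOn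
  rw [sub_zero, div_one] at hmvt
  have hmomentum : (1 + a ^ 2) * M < (ξ ^ 2 + a ^ 2) * deriv φ ξ := by
    have := hφ.monotoneOn_weighted_deriv_add ha ⟨le_rfl, zero_le_one⟩
      ⟨hξ.1.le, hξ.2.le⟩ hξ.1.le
    have initial : (0 ^ 2 + a ^ 2) * deriv φ 0 = (1 + a ^ 2) * (M + 1) := by
      rw [hslope]
      field_simp
      ring
    simp only [initial, mul_zero] at this
    nlinarith [hξ.2, sq_nonneg a]
  have : M < deriv φ ξ := by
    by_contra! hle
    have : ξ ^ 2 ≤ 1 := pow_le_one₀ hξ.1.le hξ.2.le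
    refine hmomentum.not_ge ?_
    calc (ξ ^ 2 + a ^ 2) * deriv φ ξ ≤ (ξ ^ 2 + a ^ 2) * M := by gcongr
      _ ≤ (1 + a ^ 2) * M := by gcongr
  linarith

end IsWormholeSolution

end EnergyMethod

section Shooting

open Set Topology

variable {a c b β M R r : ℝ} {n : ℕ} {Φ : ℝ → ℝ → ℝ}

/-- `Φ b` is the solution of the wormhole kink equation launched from the value `c` at `r = 0` with
slope `b`. -/
structure IsShootingFamily (a c : ℝ) (Φ : ℝ → ℝ → ℝ) : Prop where
  isWormholeSolution (b : ℝ) : IsWormholeSolution a (Φ b)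
  apply_zero (b : ℝ) : Φ b 0 = c
  deriv_zero (b : ℝ) : deriv (Φ b) 0 = b

/-- The launching slopes for which the solution exceeds the level `M` at some time `0 ≤ r`. -/
def overshootSlopes (Φ : ℝ → ℝ → ℝ) (M : ℝ) : Set ℝ := {b | ∃ r, 0 ≤ r ∧ M < Φ b r}

/-- The threshold slope of the shooting argument: the infimum of the slopes that overshoot `M`. -/
noncomputable def criticalSlope (Φ : ℝ → ℝ → ℝ) (M : ℝ) : ℝ := sInf (overshootSlopes Φ M)

theorem exists_isShootingFamily (ha : 0 < a) (c : ℝ) : ∃ Φ, IsShootingFamily a c Φ := by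
  choose Φ hsol hzero hderiv using exists_isWormholeSolution ha c
  exact ⟨Φ, hsol, hzero, hderiv⟩

theorem exists_eq_of_mem_overshootSlopes (hcont : Continuous (Φ b))
    (hb : b ∈ overshootSlopes Φ M) (hR : 0 ≤ R) (hlt : ∀ r ∈ Icc 0 R, Φ b r < M) :
    ∃ s ∈ Ici R, Φ b s = M := by
  obtain ⟨t, ht, hMt⟩ := hb
  have hRt : R ≤ t := by
    by_contra! htR
    exact (hlt t ⟨ht, htR.le⟩).not_gt hMt
  obtain ⟨s, hs, hsM⟩ := intermediate_value_Icc hRt hcont.continuousOn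
    ⟨(hlt R (right_mem_Icc.2 hR)).le, hMt.le⟩
  exact ⟨s, hs.1, hsM⟩

namespace IsShootingFamily

theorem continuous_apply (hΦ : IsShootingFamily a c Φ) (b : ℝ) : Continuous (Φ b) :=
  (hΦ.isWormholeSolution b).differentiable.continuous

theorem dist_phaseCurve_le (ha : 0 < a) (hΦ : IsShootingFamily a c Φ) (hr : 0 ≤ r) (b b' : ℝ) :
    dist (phaseCurve (Φ b) r) (phaseCurve (Φ b') r) ≤ exp ((2 + 1 / a) * r) * dist b b' := by
  have := (hΦ.isWormholeSolution b).dist_phaseCurve_le ha (hΦ.isWormholeSolution b') hr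
  simpa [phaseCurve, Prod.dist_eq, hΦ.apply_zero, hΦ.deriv_zero, mul_comm] using this

theorem continuous_phaseCurve (ha : 0 < a) (hΦ : IsShootingFamily a c Φ) (hr : 0 ≤ r) :
    Continuous fun b => phaseCurve (Φ b) r :=
  (LipschitzWith.of_dist_le_mul (K := (exp ((2 + 1 / a) * r)).toNNReal) fun b b' => by
    simpa only [coe_toNNReal _ (exp_nonneg _)] using hΦ.dist_phaseCurve_le ha hr b b').continuous

theorem continuous_energy (ha : 0 < a) (hΦ : IsShootingFamily a c Φ) (hr : 0 ≤ r) :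
    Continuous fun b => energy (Φ b) r := by
  have hcont := hΦ.continuous_phaseCurve ha hr
  exact ((hcont.snd.pow 2).div_const 2).sub ((continuous_sin.comp hcont.fst).pow 2)

theorem isOpen_overshootSlopes (ha : 0 < a) (hΦ : IsShootingFamily a c Φ) :
    IsOpen (overshootSlopes Φ M) :=
  isOpen_iff_eventually.2 fun _ ⟨r, hr, hlt⟩ =>
    ((hΦ.continuous_phaseCurve ha hr).fst.continuousAt.eventually_const_lt hlt).mono
      fun _ h => ⟨r, hr, h⟩

theorem eventually_forall_Icc_lt (ha : 0 < a) (hΦ : IsShootingFamily a c Φ)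
    (hlt : ∀ r ∈ Icc 0 R, Φ β r < M) : ∀ᶠ b in 𝓝 β, ∀ r ∈ Icc 0 R, Φ b r < M := by
  rcases (Icc (0 : ℝ) R).eq_empty_or_nonempty with hempty | hne
  · simp [hempty]
  obtain ⟨x, hx, hmax⟩ := isCompact_Icc.exists_isMaxOn hne (hΦ.continuous_apply β).continuousOn
  have hgap : Tendsto (fun b => exp ((2 + 1 / a) * R) * dist b β) (𝓝 β) (𝓝 0) :=
    Continuous.tendsto' (by fun_prop) β 0 (by simp)
  filter_upwards [hgap.eventually_lt_const (sub_pos.2 (hlt x hx))] with b hb r hr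
  have hclose : Φ b r - Φ β r ≤ exp ((2 + 1 / a) * R) * dist b β := by
    calc Φ b r - Φ β r ≤ dist (phaseCurve (Φ b) r) (phaseCurve (Φ β) r) :=
          (le_abs_self _).trans (le_max_left _ _)
      _ ≤ exp ((2 + 1 / a) * r) * dist b β := hΦ.dist_phaseCurve_le ha hr.1 b β
      _ ≤ exp ((2 + 1 / a) * R) * dist b β := by gcongr; exact hr.2
  have hle_max : Φ β r ≤ Φ β x := hmax hr
  linarith

theorem nonempty_overshootSlopes (ha : 0 < a) (hΦ : IsShootingFamily a c Φ) (hc : 0 ≤ c)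
    (hM : 0 ≤ M) : (overshootSlopes Φ M).Nonempty :=
  ⟨_, 1, zero_le_one, (hΦ.isWormholeSolution _).lt_apply_one_of_deriv_zero_eq ha
    (hc.trans_eq (hΦ.apply_zero _).symm) hM (hΦ.deriv_zero _)⟩

theorem exists_crossing (hΦ : IsShootingFamily a c Φ) (hc : c < M)
    (hb : b ∈ overshootSlopes Φ M) : ∃ s, 0 ≤ s ∧ Φ b s = M :=
  exists_eq_of_mem_overshootSlopes (hΦ.continuous_apply b) hb le_rfl fun r hr => by
    rwa [le_antisymm hr.2 hr.1, hΦ.apply_zero]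

theorem pos_of_mem_overshootSlopes (ha : 0 < a) (hΦ : IsShootingFamily a c Φ) (hc : c < n * π)
    (hb : b ∈ overshootSlopes Φ (n * π)) : 0 < b := by
  obtain ⟨s, hs, hΦs⟩ := hΦ.exists_crossing hc hb
  simpa only [hΦ.deriv_zero] using (hΦ.isWormholeSolution b).deriv_pos_of_crossing ha
    (by rwa [hΦ.apply_zero]) hΦs (left_mem_Icc.2 hs)

theorem frequently_mem_overshootSlopes (ha : 0 < a) (hΦ : IsShootingFamily a c Φ)
    (hc : c ∈ Ico 0 (n * π)) :
    ∃ᶠ b in 𝓝 (criticalSlope Φ (n * π)), b ∈ overshootSlopes Φ (n * π) :=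
  mem_closure_iff_frequently.1 <|
    csInf_mem_closure (hΦ.nonempty_overshootSlopes ha hc.1 (hc.1.trans hc.2.le))
      ⟨0, fun _ hb => (hΦ.pos_of_mem_overshootSlopes ha hc.2 hb).le⟩

theorem criticalSlope_nonneg (ha : 0 < a) (hΦ : IsShootingFamily a c Φ) (hc : c < n * π) :
    0 ≤ criticalSlope Φ (n * π) :=
  Real.sInf_nonneg fun _ hb => (hΦ.pos_of_mem_overshootSlopes ha hc hb).le

theorem criticalSlope_apply_lt (ha : 0 < a) (hΦ : IsShootingFamily a c Φ) (hc : c < n * π)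
    (hr : 0 ≤ r) : Φ (criticalSlope Φ (n * π)) r < n * π := by
  set β := criticalSlope Φ (n * π)
  have not_overshoot : β ∉ overshootSlopes Φ (n * π) :=
    csInf_notMem_of_isOpen (hΦ.isOpen_overshootSlopes ha)
      ⟨0, fun _ hb => (hΦ.pos_of_mem_overshootSlopes ha hc hb).le⟩
  have apply_le {t : ℝ} (ht : 0 ≤ t) : Φ β t ≤ n * π :=
    not_lt.1 fun h => not_overshoot ⟨t, ht, h⟩
  refine (apply_le hr).lt_of_ne fun heq => ?_
  have hr_pos : 0 < r := hr.lt_of_ne (by rintro rfl; exact hc.ne ((hΦ.apply_zero β).symm.trans heq))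
  have hmax : IsLocalMax (Φ β) r := by
    filter_upwards [Ioi_mem_nhds hr_pos] with t ht
    exact (apply_le ht.out.le).trans_eq heq.symm
  have hconst := (hΦ.isWormholeSolution β).eq_const_of_deriv_eq_zero ha hmax.deriv_eq_zero
    (by rw [heq, sin_nat_mul_pi])
  refine hc.ne ?_
  rw [← hΦ.apply_zero β, hconst, heq]

theorem criticalSlope_energy_nonneg (ha : 0 < a) (hΦ : IsShootingFamily a c Φ)
    (hc : c ∈ Ico 0 (n * π)) (hr : 0 ≤ r) : 0 ≤ energy (Φ (criticalSlope Φ (n * π))) r := by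
  by_contra! hneg
  have energy_neg := (hΦ.continuous_energy ha hr).continuousAt.eventually_lt_const hneg
  have below := hΦ.eventually_forall_Icc_lt ha (R := r)
    fun t ht => hΦ.criticalSlope_apply_lt ha hc.2 ht.1
  obtain ⟨b, hb, hlt, henergy⟩ :=
    ((hΦ.frequently_mem_overshootSlopes ha hc).and_eventually (below.and energy_neg)).exists
  obtain ⟨s, hrs, hs⟩ := exists_eq_of_mem_overshootSlopes (hΦ.continuous_apply b) hb hr hlt
  exact henergy.not_gt <| (hΦ.isWormholeSolution b).energy_pos_of_crossing ha
    (by rw [hΦ.apply_zero]; exact hc.2) hs ⟨hr, hrs⟩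

theorem le_of_criticalSlope_le (ha : 0 < a) (hΦ : IsShootingFamily a c Φ)
    (hc : c ∈ Ico 0 (n * π)) {j : ℕ}
    (hle : ∀ r, 0 ≤ r → Φ (criticalSlope Φ (n * π)) r ≤ j * π) : n ≤ j := by
  by_contra! hj
  have below := hΦ.eventually_forall_Icc_lt ha (M := j * π + π / 4) (R := 2 + a + 8 * n ^ 2)
    fun r hr => (hle r hr.1).trans_lt (by linarith [pi_pos])
  obtain ⟨b, hb, hlt⟩ := ((hΦ.frequently_mem_overshootSlopes ha hc).and_eventually below).exists
  obtain ⟨s, hs₀, hs⟩ := hΦ.exists_crossing hc.2 hb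
  obtain ⟨r, hr, hge⟩ := (hΦ.isWormholeSolution b).exists_early_passage ha
    (by rwa [hΦ.apply_zero]) hs₀ hs hj
  exact (hlt r hr).not_ge hge

theorem tendsto_criticalSlope (ha : 0 < a) (hΦ : IsShootingFamily a c Φ)
    (hc : c ∈ Ico 0 (n * π)) :
    Tendsto (Φ (criticalSlope Φ (n * π))) atTop (𝓝 (n * π)) := by
  set φ := Φ (criticalSlope Φ (n * π))
  have hφ : IsWormholeSolution a φ := hΦ.isWormholeSolution _
  have henergy (r : ℝ) (hr : 0 ≤ r) : 0 ≤ energy φ r := hΦ.criticalSlope_energy_nonneg ha hc hr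
  have hmono : MonotoneOn φ (Ici 0) :=
    monotoneOn_of_deriv_nonneg (convex_Ici 0) hφ.differentiable.continuous.continuousOn
      hφ.differentiable.differentiableOn fun r hr => hφ.deriv_nonneg_of_energy_nonneg ha
        ((hΦ.criticalSlope_nonneg ha hc.2).trans_eq (hΦ.deriv_zero _).symm) henergy
        (interior_subset hr)
  have apply_lt (r : ℝ) (hr : 0 ≤ r) : φ r < n * π := hΦ.criticalSlope_apply_lt ha hc.2 hr
  obtain ⟨L, hL, le_L⟩ := exists_tendsto_atTop_of_monotoneOn_Ici hmono
    ⟨n * π, forall_mem_image.2 fun r hr => (apply_lt r hr).le⟩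
  obtain ⟨m, hm⟩ := sin_eq_zero_iff.1
    (sin_eq_zero_of_tendsto_of_energy_nonneg hφ.differentiable henergy hL)
  have hL_nonneg : 0 ≤ m * π := by
    rw [hm]
    exact hc.1.trans ((hΦ.apply_zero _).symm.trans_le (le_L 0 self_mem_Ici))
  lift m to ℕ using by exact_mod_cast nonneg_of_mul_nonneg_left hL_nonneg pi_pos
  rw [Int.cast_natCast] at hm
  have hL_le : L ≤ n * π :=
    le_of_tendsto hL ((eventually_ge_atTop 0).mono fun r hr => (apply_lt r hr).le)
  have hmn : m ≤ n := by exact_mod_cast le_of_mul_le_mul_right (hm.trans_le hL_le) pi_pos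
  have hnm : n ≤ m := hΦ.le_of_criticalSlope_le ha hc fun r hr => hm ▸ le_L r hr
  rwa [← hm, hmn.antisymm hnm] at hL

end IsShootingFamily

end Shooting

/-- For every `a > 0` and every positive integer `n`, there exists a `C²` solution of the
wormhole kink ODE `φ'' + (2r/(r²+a²))·φ' = sin(2φ)` with `φ → 0` at `-∞` and `φ → nπ` at `+∞`. -/
theorem nkink_exists (a : ℝ) (ha : 0 < a) (n : ℕ) (hn : 0 < n) :
    ∃ φ : ℝ → ℝ, ContDiff ℝ 2 φ ∧
      (∀ r : ℝ, deriv (deriv φ) r + (2 * r / (r ^ 2 + a ^ 2)) * deriv φ r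
          = Real.sin (2 * φ r)) ∧
      Tendsto φ atBot (nhds 0) ∧
      Tendsto φ atTop (nhds (n * Real.pi)) := by
  have hc : n * π / 2 ∈ Set.Ico 0 (n * π) := ⟨by positivity, half_lt_self (by positivity)⟩
  obtain ⟨Φ, hΦ⟩ := exists_isShootingFamily ha (n * π / 2)
  set φ := Φ (criticalSlope Φ (n * π))
  have hφ : IsWormholeSolution a φ := hΦ.isWormholeSolution _
  have hlim : Tendsto φ atTop (nhds (n * π)) := hΦ.tendsto_criticalSlope ha hc
  have symm : φ = fun r => n * π - φ (-r) := hφ.eq_nat_mul_pi_sub_comp_neg ha (hΦ.apply_zero _)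
  refine ⟨φ, hφ.contDiff_two ha, fun r => ?_, ?_, hlim⟩
  · rw [(hφ.hasDerivAt_deriv r).deriv, sub_add_cancel]
  · rw [symm, ← sub_self (n * π)]
    exact (hlim.comp tendsto_neg_atBot_atTop).const_sub (n * π)
end

section
/- For every real a > 0 and every positive integer n, the n-kink is unique: if φ and ψ are both C² solutions of φ''(r) + (2r/(r²+a²))·φ'(r) = sin(2·φ(r)) on ℝ with limits 0 at −∞ and n·π at +∞, then φ = ψ. -/
open Real Filter

/-!
On `r ≥ 0` a solution dissipates both the energy `E = φ'² / 2 - sin² φ` and its weighted version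
`Q = (r² + a²)² E`. The limits of a kink force `E > 0`, so kinks are strictly increasing; they
approach `nπ` exponentially fast, so `Q → 0`.

Let two kinks take the same value at times `0 ≤ r₁ ≤ r₂`. If `Q₁(r₁) > Q₂(r₂)`, then the first kink
is also the faster one, hence it keeps reaching every later value first, and then `Q₁ - Q₂`, read
off at equal values of the two kinks, cannot decrease; this contradicts `Q₁ → 0`. So the kink that
is late has the larger `Q`. In particular `φ 0 < ψ 0` implies `E_ψ(0) < E_φ(0)`. The reflection
`r ↦ nπ - φ (-r)` reverses the order at `0` but preserves the energy there, so `φ 0 = ψ 0`; then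
`φ' 0 = ψ' 0`, and the two kinks solve the same initial value problem.
-/

open Set Asymptotics
open scoped Topology

section RealFunctions

theorem eq_zero_of_hasDerivAt_of_eqOn_const {g : ℝ → ℝ} {g' c x y z : ℝ}
    (hg : HasDerivAt g g' z) (hz : z ∈ Ioo x y) (hc : EqOn g (fun _ => c) (Ioo x y)) : g' = 0 :=
  hg.unique ((hasDerivAt_const z c).congr_of_eventuallyEq
    (hc.eventuallyEq_of_mem (Ioo_mem_nhds hz.1 hz.2)))

theorem strictAntiOn_of_hasDerivAt_nonpos {D : Set ℝ} (hD : Convex ℝ D) {g g' : ℝ → ℝ}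
    (hg : ∀ x ∈ D, HasDerivAt g (g' x) x) (hg' : ∀ x ∈ interior D, g' x ≤ 0)
    (hne : ∀ x ∈ D, ∀ y ∈ D, x < y → ∃ z ∈ Ioo x y, g' z ≠ 0) : StrictAntiOn g D := by
  have hanti : AntitoneOn g D :=
    antitoneOn_of_hasDerivWithinAt_nonpos hD
      (fun x hx => (hg x hx).continuousAt.continuousWithinAt)
      (fun x hx => (hg x (interior_subset hx)).hasDerivWithinAt) hg'
  intro x hx y hy hxy
  refine (hanti hx hy hxy.le).lt_of_ne fun heq => ?_
  have hmem : ∀ z ∈ Ioo x y, z ∈ D := fun z hz => hD.ordConnected.out hx hy (Ioo_subset_Icc_self hz)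
  have hconst : EqOn g (fun _ => g x) (Ioo x y) := fun z hz =>
    (hanti hx (hmem z hz) hz.1.le).antisymm (heq.symm.trans_le (hanti (hmem z hz) hy hz.2.le))
  obtain ⟨z, hz, hz'⟩ := hne x hx y hy hxy
  exact hz' (eq_zero_of_hasDerivAt_of_eqOn_const (hg z (hmem z hz)) hz hconst)

theorem eventually_nhdsGT_lt_of_hasDerivAt_pos {g : ℝ → ℝ} {g' x : ℝ} (hg : HasDerivAt g g' x)
    (hg' : 0 < g') : ∀ᶠ y in 𝓝[>] x, g x < g y := by
  have hslope : ∀ᶠ y in 𝓝[>] x, 0 < slope g x y :=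
    ((hasDerivWithinAt_iff_tendsto_slope' self_notMem_Ioi).1
      hg.hasDerivWithinAt).eventually_const_lt hg'
  filter_upwards [hslope, self_mem_nhdsWithin] with y hy hxy
  exact (slope_pos_iff_of_le (le_of_lt hxy)).1 hy

-- `A' > 0` already where `A = 0`, so `A ≥ 0` persists just to the right of any point.
theorem le_of_coupled_hasDerivAt {A A' B B' : ℝ → ℝ} {b : ℝ}
    (hA : ∀ x ∈ Ici b, HasDerivAt A (A' x) x) (hB : ∀ x ∈ Ici b, HasDerivAt B (B' x) x)
    (hAb : 0 ≤ A b) (hBb : 0 < B b)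
    (hA' : ∀ x ∈ Ici b, 0 ≤ A x → 0 < B x → 0 < A' x)
    (hB' : ∀ x ∈ Ici b, 0 ≤ A x → 0 < B x → 0 ≤ B' x) {x : ℝ} (hx : x ∈ Ici b) :
    B b ≤ B x := by
  let S : Set ℝ := {y | 0 ≤ A y ∧ B b ≤ B y}
  suffices Icc b x ⊆ S from (this (right_mem_Icc.2 hx)).2
  refine IsClosed.Icc_subset_of_forall_mem_nhdsGT_of_Icc_subset ?_ ⟨hAb, le_rfl⟩ ?_
  · have hcont : ContinuousOn (fun y => (A y, B y)) (Icc b x) := fun y hy =>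
      ((hA y hy.1).continuousAt.prodMk (hB y hy.1).continuousAt).continuousWithinAt
    rw [inter_comm]
    exact hcont.preimage_isClosed_of_isClosed isClosed_Icc (isClosed_Ici (a := ((0 : ℝ), B b)))
  · intro t ht htS
    have hbt : t ∈ Ici b := ht.1
    obtain ⟨hAt, hBt⟩ := htS (right_mem_Icc.2 ht.1)
    have hApos : ∀ᶠ s in 𝓝[>] t, A t < A s := eventually_nhdsGT_lt_of_hasDerivAt_pos (hA t hbt)
      (hA' t hbt hAt (hBb.trans_le hBt))
    have hBpos : ∀ᶠ s in 𝓝[>] t, 0 < B s :=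
      ((hB t hbt).continuousAt.eventually_const_lt (hBb.trans_le hBt)).filter_mono
        nhdsWithin_le_nhds
    obtain ⟨u, hu, hAB⟩ := mem_nhdsGT_iff_exists_Ioo_subset.1 (hApos.and hBpos)
    filter_upwards [Ioo_mem_nhdsGT hu] with s hs
    have hmono : MonotoneOn B (Icc t s) := by
      refine monotoneOn_of_hasDerivWithinAt_nonneg (f' := B') (convex_Icc t s)
        (fun y hy => (hB y (hbt.trans hy.1)).continuousAt.continuousWithinAt)
        (fun y hy => (hB y (hbt.trans (interior_subset hy).1)).hasDerivWithinAt) ?_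
      intro y hy
      rw [interior_Icc] at hy
      obtain ⟨hAy, hBy⟩ := hAB ⟨hy.1, hy.2.trans hs.2⟩
      exact hB' y (hbt.trans hy.1.le) (hAt.trans hAy.le) hBy
    exact ⟨hAt.trans (hAB hs).1.le,
      hBt.trans (hmono (left_mem_Icc.2 hs.1.le) (right_mem_Icc.2 hs.1.le) hs.1.le)⟩

theorem isBigO_exp_neg_of_hasDerivAt_le {u u' : ℝ → ℝ} {c : ℝ} (hu : ∀ r, HasDerivAt u (u' r) r)
    (hnonneg : ∀ᶠ r in atTop, 0 ≤ u r) (hle : ∀ᶠ r in atTop, u' r ≤ -c * u r) :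
    u =O[atTop] fun r => exp (-(c * r)) := by
  obtain ⟨R, hR⟩ := eventually_atTop.1 hle
  have hderiv (r : ℝ) :
      HasDerivAt (fun r => u r * exp (c * r)) ((u' r + c * u r) * exp (c * r)) r :=
    ((hu r).mul ((hasDerivAt_id r).const_mul c).exp).congr_deriv (by simp only [id]; ring)
  have hanti : AntitoneOn (fun r => u r * exp (c * r)) (Ici R) :=
    antitoneOn_of_hasDerivWithinAt_nonpos (convex_Ici R)
      (fun r _ => (hderiv r).continuousAt.continuousWithinAt)
      (fun r _ => (hderiv r).hasDerivWithinAt)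
      fun r hr => mul_nonpos_of_nonpos_of_nonneg
        (by linarith [hR r (interior_subset hr)]) (exp_pos _).le
  refine IsBigO.of_bound (u R * exp (c * R)) ?_
  filter_upwards [hnonneg, eventually_ge_atTop R] with r hr hRr
  rw [norm_of_nonneg hr, norm_of_nonneg (exp_pos _).le, exp_neg, ← div_eq_mul_inv,
    le_div_iff₀ (exp_pos _)]
  exact hanti self_mem_Ici hRr hRr

end RealFunctions

/-- A global solution of the wormhole kink equation with throat radius `a`; the limits at `±∞`
are left free. -/
structure IsKinkSolution (a : ℝ) (φ : ℝ → ℝ) : Prop where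
  contDiff : ContDiff ℝ 2 φ
  ode : ∀ r : ℝ, deriv (deriv φ) r + (2 * r / (r ^ 2 + a ^ 2)) * deriv φ r = sin (2 * φ r)

/-- An `n`-kink: a solution running from the equilibrium `0` at `-∞` to `nπ` at `+∞`. -/
structure IsKink (a : ℝ) (n : ℕ) (φ : ℝ → ℝ) : Prop extends IsKinkSolution a φ where
  tendsto_atBot : Tendsto φ atBot (𝓝 0)
  tendsto_atTop : Tendsto φ atTop (𝓝 (n * π))

/-- The energy of the pendulum-like equation `φ'' = sin (2φ)`, which the friction term of the kink
equation dissipates for `r > 0`. -/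
noncomputable def kinkEnergy (φ : ℝ → ℝ) (r : ℝ) : ℝ :=
  deriv φ r ^ 2 / 2 - sin (φ r) ^ 2

/-- The energy weighted by `(r² + a²)²`. This weight cancels the `φ'²` terms in the derivative of
the product, which is then a function of `r` and `φ r` alone. -/
noncomputable def weightedKinkEnergy (a : ℝ) (φ : ℝ → ℝ) (r : ℝ) : ℝ :=
  (r ^ 2 + a ^ 2) ^ 2 * kinkEnergy φ r

/-- The time at which `ψ` takes the value `φ r`, used to compare two kinks at equal values. It is
meaningful only if `φ r` lies in the range of the injective function `ψ`. -/
noncomputable def matchingTime (φ ψ : ℝ → ℝ) (r : ℝ) : ℝ :=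
  Function.invFun ψ (φ r)

theorem matchingTime_of_eq {φ ψ : ℝ → ℝ} (hψ : Function.Injective ψ) {r s : ℝ} (h : φ r = ψ s) :
    matchingTime φ ψ r = s := by
  rw [matchingTime, h, Function.leftInverse_invFun hψ]

variable {a : ℝ}

theorem abs_friction_le (ha : 0 < a) (r : ℝ) : |2 * r / (r ^ 2 + a ^ 2)| ≤ 1 / a := by
  have hw : 0 < r ^ 2 + a ^ 2 := by positivity
  rw [abs_div, abs_of_pos hw, div_le_div_iff₀ hw ha, abs_mul, abs_two]
  nlinarith [sq_nonneg (|r| - a), sq_abs r]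

theorem exists_lipschitzWith_kinkField (ha : 0 < a) : ∃ K, ∀ r : ℝ, LipschitzWith K
    fun x : ℝ × ℝ => (x.2, sin (2 * x.1) - 2 * r / (r ^ 2 + a ^ 2) * x.2) := by
  refine ⟨_, fun r => LipschitzWith.prod_snd.prodMk (.sub
    (lipschitzWith_sin.comp ((lipschitzWith_smul (2 : ℝ)).comp LipschitzWith.prod_fst))
    (LipschitzWith.weaken (K' := ⟨1 / a, by positivity⟩)
      ((lipschitzWith_smul (2 * r / (r ^ 2 + a ^ 2))).comp LipschitzWith.prod_snd) ?_))⟩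
  rw [mul_one]
  exact abs_friction_le ha r

namespace IsKinkSolution

variable {φ ψ : ℝ → ℝ}

theorem hasDerivAt (hφ : IsKinkSolution a φ) (r : ℝ) : HasDerivAt φ (deriv φ r) r :=
  (hφ.contDiff.differentiable two_ne_zero r).hasDerivAt

theorem hasDerivAt_deriv (hφ : IsKinkSolution a φ) (r : ℝ) :
    HasDerivAt (deriv φ) (sin (2 * φ r) - 2 * r / (r ^ 2 + a ^ 2) * deriv φ r) r :=
  have hφ' : ContDiff ℝ 1 (deriv φ) := hφ.contDiff.deriv'
  (hφ'.differentiable one_ne_zero r).hasDerivAt.congr_deriv (eq_sub_of_add_eq (hφ.ode r))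

theorem const {c : ℝ} (hc : sin (2 * c) = 0) : IsKinkSolution a fun _ => c where
  contDiff := contDiff_const
  ode r := by simp [hc]

theorem eq_of_eq_of_deriv_eq (ha : 0 < a) (hφ : IsKinkSolution a φ) (hψ : IsKinkSolution a ψ)
    {t : ℝ} (h : φ t = ψ t) (h' : deriv φ t = deriv ψ t) : φ = ψ := by
  obtain ⟨K, hK⟩ := exists_lipschitzWith_kinkField ha
  have hpair : (fun r => (φ r, deriv φ r)) = fun r => (ψ r, deriv ψ r) :=
    ODE_solution_unique_univ (s := fun _ => univ) (fun r => (hK r).lipschitzOnWith)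
      (fun r => ⟨(hφ.hasDerivAt r).prodMk (hφ.hasDerivAt_deriv r), mem_univ _⟩)
      (fun r => ⟨(hψ.hasDerivAt r).prodMk (hψ.hasDerivAt_deriv r), mem_univ _⟩)
      (Prod.ext h h')
  exact funext fun r => congrArg Prod.fst (congrFun hpair r)

theorem exists_mem_Ioo_deriv_ne_zero (ha : 0 < a) (hφ : IsKinkSolution a φ)
    (hne : ∀ c, φ ≠ fun _ => c) {x y : ℝ} (hxy : x < y) : ∃ z ∈ Ioo x y, deriv φ z ≠ 0 := by
  by_contra! hzero
  obtain ⟨z, hz⟩ := exists_between hxy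
  have hsin : sin (2 * φ z) = 0 := by
    have := eq_zero_of_hasDerivAt_of_eqOn_const (hφ.hasDerivAt_deriv z) hz hzero
    rwa [hzero z hz, mul_zero, sub_zero] at this
  exact hne (φ z) (hφ.eq_of_eq_of_deriv_eq ha (.const hsin) rfl (by simp [hzero z hz]))

theorem hasDerivAt_kinkEnergy (hφ : IsKinkSolution a φ) (r : ℝ) :
    HasDerivAt (kinkEnergy φ) (-(2 * r / (r ^ 2 + a ^ 2) * deriv φ r ^ 2)) r := by
  refine ((((hφ.hasDerivAt_deriv r).pow 2).div_const 2).sub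
    ((hφ.hasDerivAt r).sin.pow 2)).congr_deriv ?_
  rw [sin_two_mul]
  push_cast
  ring

theorem hasDerivAt_weightedKinkEnergy (ha : 0 < a) (hφ : IsKinkSolution a φ) (r : ℝ) :
    HasDerivAt (weightedKinkEnergy a φ) (-(4 * r * (r ^ 2 + a ^ 2) * sin (φ r) ^ 2)) r := by
  refine ((((hasDerivAt_pow 2 r).add_const (a ^ 2)).pow 2).mul
    (hφ.hasDerivAt_kinkEnergy r)).congr_deriv ?_
  have hw : r ^ 2 + a ^ 2 ≠ 0 := by positivity
  simp only [kinkEnergy, Pi.pow_apply]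
  push_cast
  field_simp
  ring

theorem strictAntiOn_kinkEnergy (ha : 0 < a) (hφ : IsKinkSolution a φ)
    (hne : ∀ c, φ ≠ fun _ => c) : StrictAntiOn (kinkEnergy φ) (Ici 0) := by
  refine strictAntiOn_of_hasDerivAt_nonpos (convex_Ici 0)
    (fun r _ => hφ.hasDerivAt_kinkEnergy r) (fun r hr => ?_) fun x hx y _ hxy => ?_
  · have hr : 0 ≤ r := interior_subset hr
    exact neg_nonpos.2 (by positivity)
  · obtain ⟨z, hz, hz'⟩ := hφ.exists_mem_Ioo_deriv_ne_zero ha hne hxy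
    have hz0 : 0 < z := lt_of_le_of_lt hx hz.1
    exact ⟨z, hz, neg_ne_zero.2 (by positivity)⟩

theorem strictAntiOn_weightedKinkEnergy (ha : 0 < a) (hφ : IsKinkSolution a φ)
    (hpos : ∀ r, 0 < deriv φ r) : StrictAntiOn (weightedKinkEnergy a φ) (Ici 0) := by
  refine strictAntiOn_of_hasDerivAt_nonpos (convex_Ici 0)
    (fun r _ => hφ.hasDerivAt_weightedKinkEnergy ha r) (fun r hr => ?_) fun x hx y _ hxy => ?_
  · have hr : 0 ≤ r := interior_subset hr
    exact neg_nonpos.2 (by positivity)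
  · obtain ⟨z, hz, hz'⟩ : ∃ z ∈ Ioo x y, sin (φ z) ≠ 0 := by
      by_contra! hzero
      obtain ⟨z, hz⟩ := exists_between hxy
      have hcos : cos (φ z) = 0 := (mul_eq_zero.1 (eq_zero_of_hasDerivAt_of_eqOn_const
        (hφ.hasDerivAt z).sin hz hzero)).resolve_right (hpos z).ne'
      simpa [hzero z hz, hcos] using sin_sq_add_cos_sq (φ z)
    have hz0 : 0 < z := lt_of_le_of_lt hx hz.1
    exact ⟨z, hz, neg_ne_zero.2 (by positivity)⟩

end IsKinkSolution

theorem kinkEnergy_nat_mul_pi_sub_comp_neg (n : ℕ) (φ : ℝ → ℝ) (r : ℝ) :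
    kinkEnergy (fun r => n * π - φ (-r)) r = kinkEnergy φ (-r) := by
  simp [kinkEnergy, deriv_comp_neg, sin_nat_mul_pi_sub, mul_pow, pow_right_comm (-1 : ℝ) n 2]

namespace IsKink

variable {n : ℕ} {φ ψ : ℝ → ℝ}

theorem reflect (hφ : IsKink a n φ) : IsKink a n fun r => n * π - φ (-r) where
  contDiff := contDiff_const.sub (hφ.contDiff.comp contDiff_neg)
  ode r := by
    have hderiv : deriv (fun r => n * π - φ (-r)) = fun r => deriv φ (-r) := by
      funext r
      simp [deriv_comp_neg]
    have hsin : sin (2 * (n * π - φ (-r))) = -sin (2 * φ (-r)) := by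
      rw [show 2 * (n * π - φ (-r)) = n * (2 * π) - 2 * φ (-r) by ring, sin_nat_mul_two_pi_sub]
    rw [hderiv, deriv_comp_neg (deriv φ), hsin, ← hφ.ode (-r)]
    ring
  tendsto_atBot := by
    simpa using (hφ.tendsto_atTop.comp tendsto_neg_atBot_atTop).const_sub (n * π)
  tendsto_atTop := by
    simpa using (hφ.tendsto_atBot.comp tendsto_neg_atTop_atBot).const_sub (n * π)

theorem ne_const (hn : 0 < n) (hφ : IsKink a n φ) (c : ℝ) : φ ≠ fun _ => c := by
  rintro rfl
  have hc : c = 0 := tendsto_const_nhds_iff.1 hφ.tendsto_atBot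
  have hc' : c = n * π := tendsto_const_nhds_iff.1 hφ.tendsto_atTop
  exact (by positivity : (n : ℝ) * π ≠ 0) (hc'.symm.trans hc)

theorem kinkEnergy_pos_of_nonneg (ha : 0 < a) (hn : 0 < n) (hφ : IsKink a n φ) {r : ℝ}
    (hr : 0 ≤ r) : 0 < kinkEnergy φ r := by
  have hanti : StrictAntiOn (kinkEnergy φ) (Ici 0) :=
    hφ.strictAntiOn_kinkEnergy ha (hφ.ne_const hn)
  have hsin : Tendsto (fun x => -sin (φ x) ^ 2) atTop (𝓝 0) := by
    simpa [sin_nat_mul_pi] using (((continuous_sin.tendsto _).comp hφ.tendsto_atTop).pow 2).neg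
  have hnonneg : 0 ≤ kinkEnergy φ (r + 1) := by
    refine le_of_tendsto hsin ?_
    filter_upwards [eventually_ge_atTop (r + 1)] with x hx
    calc -sin (φ x) ^ 2 ≤ kinkEnergy φ x := by rw [kinkEnergy]; linarith [sq_nonneg (deriv φ x)]
      _ ≤ kinkEnergy φ (r + 1) := hanti.antitoneOn (mem_Ici.2 (by linarith))
          (mem_Ici.2 (by linarith)) hx
  exact hnonneg.trans_lt (hanti hr (mem_Ici.2 (by linarith)) (lt_add_one r))

theorem kinkEnergy_pos (ha : 0 < a) (hn : 0 < n) (hφ : IsKink a n φ) (r : ℝ) :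
    0 < kinkEnergy φ r := by
  rcases le_total 0 r with hr | hr
  · exact hφ.kinkEnergy_pos_of_nonneg ha hn hr
  · have := hφ.reflect.kinkEnergy_pos_of_nonneg ha hn (neg_nonneg.2 hr)
    rwa [kinkEnergy_nat_mul_pi_sub_comp_neg, neg_neg] at this

theorem weightedKinkEnergy_pos (ha : 0 < a) (hn : 0 < n) (hφ : IsKink a n φ) (r : ℝ) :
    0 < weightedKinkEnergy a φ r :=
  mul_pos (by positivity) (hφ.kinkEnergy_pos ha hn r)

theorem deriv_pos (ha : 0 < a) (hn : 0 < n) (hφ : IsKink a n φ) (r : ℝ) : 0 < deriv φ r := by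
  have hne : ∀ x, deriv φ x ≠ 0 := fun x hx => by
    have := hφ.kinkEnergy_pos ha hn x
    rw [kinkEnergy, hx] at this
    linarith [sq_nonneg (sin (φ x))]
  have hcont : Continuous (deriv φ) :=
    continuous_iff_continuousAt.2 fun x => (hφ.hasDerivAt_deriv x).continuousAt
  obtain ⟨x, hx⟩ : ∃ x, 0 ≤ deriv φ x := by
    by_contra! hneg
    have hanti : Antitone φ :=
      antitone_of_deriv_nonpos (fun x => (hφ.hasDerivAt x).differentiableAt) fun x => (hneg x).le
    have hle : (n : ℝ) * π ≤ 0 :=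
      (hanti.le_of_tendsto hφ.tendsto_atTop 0).trans (hanti.ge_of_tendsto hφ.tendsto_atBot 0)
    exact hle.not_gt (by positivity)
  by_contra! hr
  obtain ⟨y, hy⟩ := mem_range_of_exists_le_of_exists_ge hcont ⟨r, hr⟩ ⟨x, hx⟩
  exact hne y hy

theorem strictMono (ha : 0 < a) (hn : 0 < n) (hφ : IsKink a n φ) : StrictMono φ :=
  strictMono_of_deriv_pos (hφ.deriv_pos ha hn)

theorem range_eq (ha : 0 < a) (hn : 0 < n) (hφ : IsKink a n φ) : range φ = Ioo 0 (n * π) := by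
  have hmono := hφ.strictMono ha hn
  refine Subset.antisymm ?_ fun s hs => ?_
  · rintro _ ⟨r, rfl⟩
    exact ⟨(hmono.monotone.le_of_tendsto hφ.tendsto_atBot _).trans_lt (hmono (sub_one_lt r)),
      (hmono (lt_add_one r)).trans_le (hmono.monotone.ge_of_tendsto hφ.tendsto_atTop _)⟩
  · obtain ⟨x, hx⟩ := (hφ.tendsto_atBot.eventually_lt_const hs.1).exists
    obtain ⟨y, hy⟩ := (hφ.tendsto_atTop.eventually_const_lt hs.2).exists
    exact mem_range_of_exists_le_of_exists_ge hφ.contDiff.continuous ⟨x, hx.le⟩ ⟨y, hy.le⟩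

theorem lt_nat_mul_pi (ha : 0 < a) (hn : 0 < n) (hφ : IsKink a n φ) (r : ℝ) : φ r < n * π :=
  ((hφ.range_eq ha hn).subset (mem_range_self r)).2

theorem eventually_half_sub_le_deriv (ha : 0 < a) (hn : 0 < n) (hφ : IsKink a n φ) :
    ∀ᶠ r in atTop, (n * π - φ r) / 2 ≤ deriv φ r := by
  filter_upwards [hφ.tendsto_atTop.eventually_const_lt (sub_lt_self (n * π) pi_div_two_pos)]
    with r hr
  have hgap : 0 < n * π - φ r := sub_pos.2 (hφ.lt_nat_mul_pi ha hn r)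
  have hsin_sq : sin (n * π - φ r) ^ 2 = sin (φ r) ^ 2 := by
    simp [sin_nat_mul_pi_sub, mul_pow, pow_right_comm (-1 : ℝ) n 2]
  have hsin : (n * π - φ r) / 2 ≤ sin (n * π - φ r) :=
    calc (n * π - φ r) / 2 = 2 / 4 * (n * π - φ r) := by ring
      _ ≤ 2 / π * (n * π - φ r) := by gcongr; exact pi_le_four
      _ ≤ sin (n * π - φ r) := mul_le_sin hgap.le (by linarith)
  refine le_of_sq_le_sq ?_ (hφ.deriv_pos ha hn r).le
  have henergy := hφ.kinkEnergy_pos ha hn r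
  rw [kinkEnergy] at henergy
  calc ((n * π - φ r) / 2) ^ 2 ≤ sin (n * π - φ r) ^ 2 := by gcongr
    _ = sin (φ r) ^ 2 := hsin_sq
    _ ≤ deriv φ r ^ 2 := by linarith [sq_nonneg (sin (φ r))]

theorem isBigO_nat_mul_pi_sub (ha : 0 < a) (hn : 0 < n) (hφ : IsKink a n φ) :
    (fun r => n * π - φ r) =O[atTop] fun r => exp (-(1 / 2 * r)) := by
  refine isBigO_exp_neg_of_hasDerivAt_le (fun r => (hφ.hasDerivAt r).const_sub (n * π))
    (.of_forall fun r => (sub_pos.2 (hφ.lt_nat_mul_pi ha hn r)).le) ?_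
  filter_upwards [hφ.eventually_half_sub_le_deriv ha hn] with r hr
  linarith

theorem kinkEnergy_le (ha : 0 < a) (hn : 0 < n) (hφ : IsKink a n φ) {r : ℝ} (hr : 1 ≤ r) :
    kinkEnergy φ r ≤ (n * π - φ (r - 1)) ^ 2 := by
  obtain ⟨x, hx, hslope⟩ := exists_deriv_eq_slope φ (sub_one_lt r)
    hφ.contDiff.continuous.continuousOn
    (hφ.contDiff.differentiable two_ne_zero).differentiableOn
  have hgap : deriv φ x ≤ n * π - φ (r - 1) := by
    rw [hslope, sub_sub_cancel, div_one]
    linarith [hφ.lt_nat_mul_pi ha hn r]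
  have hderiv := (hφ.deriv_pos ha hn x).le
  calc kinkEnergy φ r ≤ kinkEnergy φ x :=
        (hφ.strictAntiOn_kinkEnergy ha (hφ.ne_const hn)).antitoneOn
          (mem_Ici.2 (by linarith [hx.1])) (mem_Ici.2 (by linarith)) hx.2.le
    _ ≤ deriv φ x ^ 2 := by
        rw [kinkEnergy]
        linarith [sq_nonneg (deriv φ x), sq_nonneg (sin (φ x))]
    _ ≤ (n * π - φ (r - 1)) ^ 2 := by gcongr

theorem isBigO_kinkEnergy (ha : 0 < a) (hn : 0 < n) (hφ : IsKink a n φ) :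
    kinkEnergy φ =O[atTop] fun r => exp (-r) := by
  have hgap : (fun r => (n * π - φ (r - 1)) ^ 2) =O[atTop] fun r => exp 1 * exp (-r) := by
    refine (((hφ.isBigO_nat_mul_pi_sub ha hn).comp_tendsto
      (tendsto_atTop_add_const_right atTop (-1) tendsto_id)).pow 2).congr_right fun r => ?_
    simp only [Function.comp_apply, id]
    rw [← exp_nat_mul, ← exp_add]
    congr 1
    push_cast
    ring
  refine (IsBigO.of_bound' ?_).trans (hgap.trans (isBigO_const_mul_self _ _ _))
  filter_upwards [eventually_ge_atTop 1] with r hr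
  rw [norm_of_nonneg (hφ.kinkEnergy_pos ha hn r).le, norm_of_nonneg (sq_nonneg _)]
  exact hφ.kinkEnergy_le ha hn hr

theorem tendsto_weightedKinkEnergy (ha : 0 < a) (hn : 0 < n) (hφ : IsKink a n φ) :
    Tendsto (weightedKinkEnergy a φ) atTop (𝓝 0) := by
  have hpoly : Tendsto (fun r : ℝ => (r ^ 2 + a ^ 2) ^ 2 * exp (-r)) atTop (𝓝 0) := by
    refine (Polynomial.tendsto_div_exp_atTop
      ((Polynomial.X ^ 2 + Polynomial.C (a ^ 2)) ^ 2)).congr fun r => ?_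
    rw [Polynomial.eval_pow, Polynomial.eval_add, Polynomial.eval_pow, Polynomial.eval_X,
      Polynomial.eval_C, exp_neg, div_eq_mul_inv]
  exact ((isBigO_refl _ atTop).mul (hφ.isBigO_kinkEnergy ha hn)).trans_tendsto hpoly

theorem apply_matchingTime (ha : 0 < a) (hn : 0 < n) (hφ : IsKink a n φ) (hψ : IsKink a n ψ)
    (r : ℝ) : ψ (matchingTime φ ψ r) = φ r :=
  Function.invFun_eq <| (hψ.range_eq ha hn).superset <|
    (hφ.range_eq ha hn).subset <| mem_range_self r

theorem hasDerivAt_matchingTime (ha : 0 < a) (hn : 0 < n) (hφ : IsKink a n φ) (hψ : IsKink a n ψ)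
    (r : ℝ) : HasDerivAt (matchingTime φ ψ) (deriv φ r / deriv ψ (matchingTime φ ψ r)) r := by
  have hinv := (hψ.contDiff.hasStrictDerivAt two_ne_zero).to_local_left_inverse
    (hψ.deriv_pos ha hn (matchingTime φ ψ r)).ne'
    (.of_forall (Function.leftInverse_invFun (hψ.strictMono ha hn).injective))
  rw [hφ.apply_matchingTime ha hn hψ] at hinv
  exact (hinv.hasDerivAt.comp r (hφ.hasDerivAt r)).congr_deriv (inv_mul_eq_div _ _)

theorem deriv_lt_of_weightedKinkEnergy_lt (ha : 0 < a) (hn : 0 < n) (hφ : IsKink a n φ)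
    (hψ : IsKink a n ψ) {r s : ℝ} (hr : 0 ≤ r) (hrs : r ≤ s) (h : φ r = ψ s)
    (hlt : weightedKinkEnergy a ψ s < weightedKinkEnergy a φ r) : deriv ψ s < deriv φ r := by
  have henergy : kinkEnergy ψ s < kinkEnergy φ r := by
    refine lt_of_mul_lt_mul_left (lt_of_le_of_lt ?_ hlt) (by positivity)
    have := (hψ.kinkEnergy_pos ha hn s).le
    rw [weightedKinkEnergy]
    gcongr
  rw [kinkEnergy, kinkEnergy, h] at henergy
  exact lt_of_pow_lt_pow_left₀ 2 (hφ.deriv_pos ha hn r).le (by linarith)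

theorem weightedKinkEnergy_sub_matchingTime_le (ha : 0 < a) (hn : 0 < n) (hφ : IsKink a n φ)
    (hψ : IsKink a n ψ) {r₁ r : ℝ} (h₀ : 0 ≤ r₁) (hle : r₁ ≤ matchingTime φ ψ r₁)
    (hlt : weightedKinkEnergy a ψ (matchingTime φ ψ r₁) < weightedKinkEnergy a φ r₁)
    (hr : r₁ ≤ r) :
    weightedKinkEnergy a φ r₁ - weightedKinkEnergy a ψ (matchingTime φ ψ r₁) ≤
      weightedKinkEnergy a φ r - weightedKinkEnergy a ψ (matchingTime φ ψ r) := by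
  set R := matchingTime φ ψ
  have hφR : ∀ x, φ x = ψ (R x) := fun x => (hφ.apply_matchingTime ha hn hψ x).symm
  have hR : ∀ x, HasDerivAt R (deriv φ x / deriv ψ (R x)) x := hφ.hasDerivAt_matchingTime ha hn hψ
  let delay : ℝ → ℝ := fun x => R x - x
  let gap : ℝ → ℝ := fun x => weightedKinkEnergy a φ x - weightedKinkEnergy a ψ (R x)
  have hfaster : ∀ x ∈ Ici r₁, 0 ≤ delay x → 0 < gap x → 1 < deriv φ x / deriv ψ (R x) :=
    fun x hx hdelay hgap => (one_lt_div (hψ.deriv_pos ha hn _)).2 <|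
      hφ.deriv_lt_of_weightedKinkEnergy_lt ha hn hψ (h₀.trans hx) (sub_nonneg.1 hdelay) (hφR x)
        (sub_pos.1 hgap)
  refine le_of_coupled_hasDerivAt (A := delay) (B := gap)
    (fun x _ => (hR x).sub (hasDerivAt_id x))
    (fun x _ => (hφ.hasDerivAt_weightedKinkEnergy ha x).sub
      ((hψ.hasDerivAt_weightedKinkEnergy ha (R x)).comp x (hR x)))
    (sub_nonneg.2 hle) (sub_pos.2 hlt)
    (fun x hx hdelay hgap => sub_pos.2 (hfaster x hx hdelay hgap))
    (fun x hx hdelay hgap => ?_) hr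
  have hx0 : 0 ≤ x := h₀.trans hx
  have hxR : x ≤ R x := sub_nonneg.1 hdelay
  have hR0 : 0 ≤ R x := hx0.trans hxR
  have hrate : 4 * x * (x ^ 2 + a ^ 2) * sin (φ x) ^ 2 ≤
      4 * R x * (R x ^ 2 + a ^ 2) * sin (φ x) ^ 2 * (deriv φ x / deriv ψ (R x)) :=
    calc 4 * x * (x ^ 2 + a ^ 2) * sin (φ x) ^ 2
        ≤ 4 * R x * (R x ^ 2 + a ^ 2) * sin (φ x) ^ 2 := by gcongr
      _ ≤ _ := le_mul_of_one_le_right (by positivity) (hfaster x hx hdelay hgap).le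
  rw [← hφR x]
  linarith

theorem weightedKinkEnergy_le_of_le (ha : 0 < a) (hn : 0 < n) (hφ : IsKink a n φ)
    (hψ : IsKink a n ψ) {r₁ r₂ : ℝ} (h₀ : 0 ≤ r₁) (hle : r₁ ≤ r₂) (h : φ r₁ = ψ r₂) :
    weightedKinkEnergy a φ r₁ ≤ weightedKinkEnergy a ψ r₂ := by
  by_contra! hlt
  obtain rfl : matchingTime φ ψ r₁ = r₂ := matchingTime_of_eq (hψ.strictMono ha hn).injective h
  have hgap_nonpos :
      weightedKinkEnergy a φ r₁ - weightedKinkEnergy a ψ (matchingTime φ ψ r₁) ≤ 0 := by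
    refine ge_of_tendsto (hφ.tendsto_weightedKinkEnergy ha hn) ?_
    filter_upwards [eventually_ge_atTop r₁] with r hr
    exact (hφ.weightedKinkEnergy_sub_matchingTime_le ha hn hψ h₀ hle hlt hr).trans
      (sub_le_self _ (hψ.weightedKinkEnergy_pos ha hn _).le)
  exact hgap_nonpos.not_gt (sub_pos.2 hlt)

theorem kinkEnergy_lt_of_apply_zero_lt (ha : 0 < a) (hn : 0 < n) (hφ : IsKink a n φ)
    (hψ : IsKink a n ψ) (hlt : φ 0 < ψ 0) : kinkEnergy ψ 0 < kinkEnergy φ 0 := by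
  obtain ⟨ρ, hρ⟩ : ψ 0 ∈ range φ :=
    (hφ.range_eq ha hn).superset ((hψ.range_eq ha hn).subset (mem_range_self 0))
  have hρ_pos : 0 < ρ := (hφ.strictMono ha hn).lt_iff_lt.1 (hρ.symm ▸ hlt)
  have hweighted : weightedKinkEnergy a ψ 0 < weightedKinkEnergy a φ 0 :=
    (hψ.weightedKinkEnergy_le_of_le ha hn hφ le_rfl hρ_pos.le hρ.symm).trans_lt
      (hφ.strictAntiOn_weightedKinkEnergy ha (hφ.deriv_pos ha hn) self_mem_Ici hρ_pos.le hρ_pos)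
  exact lt_of_mul_lt_mul_left hweighted (by positivity)

theorem apply_zero_le (ha : 0 < a) (hn : 0 < n) (hφ : IsKink a n φ) (hψ : IsKink a n ψ) :
    ψ 0 ≤ φ 0 := by
  by_contra! hlt
  have hreflect := hψ.reflect.kinkEnergy_lt_of_apply_zero_lt ha hn hφ.reflect (by simpa using hlt)
  rw [kinkEnergy_nat_mul_pi_sub_comp_neg, kinkEnergy_nat_mul_pi_sub_comp_neg, neg_zero] at hreflect
  exact hreflect.not_gt (hφ.kinkEnergy_lt_of_apply_zero_lt ha hn hψ hlt)

theorem deriv_zero_le (ha : 0 < a) (hn : 0 < n) (hφ : IsKink a n φ) (hψ : IsKink a n ψ)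
    (h : φ 0 = ψ 0) : deriv φ 0 ≤ deriv ψ 0 := by
  by_contra! hlt
  have hweighted := hφ.weightedKinkEnergy_le_of_le ha hn hψ le_rfl le_rfl h
  have henergy : kinkEnergy φ 0 ≤ kinkEnergy ψ 0 :=
    le_of_mul_le_mul_left hweighted (by positivity)
  rw [kinkEnergy, kinkEnergy, h] at henergy
  linarith [pow_lt_pow_left₀ hlt (hψ.deriv_pos ha hn 0).le two_ne_zero]

end IsKink

/-- Uniqueness of the `n`-kink: two `C²` solutions of the wormhole kink ODE with limits
`0` at `-∞` and `nπ` at `+∞` coincide. -/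
theorem nkink_unique (a : ℝ) (ha : 0 < a) (n : ℕ) (hn : 0 < n)
    (φ ψ : ℝ → ℝ)
    (hφ : ContDiff ℝ 2 φ)
    (hφeq : ∀ r : ℝ, deriv (deriv φ) r + (2 * r / (r ^ 2 + a ^ 2)) * deriv φ r
        = Real.sin (2 * φ r))
    (hφbot : Tendsto φ atBot (nhds 0))
    (hφtop : Tendsto φ atTop (nhds (n * Real.pi)))
    (hψ : ContDiff ℝ 2 ψ)
    (hψeq : ∀ r : ℝ, deriv (deriv ψ) r + (2 * r / (r ^ 2 + a ^ 2)) * deriv ψ r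
        = Real.sin (2 * ψ r))
    (hψbot : Tendsto ψ atBot (nhds 0))
    (hψtop : Tendsto ψ atTop (nhds (n * Real.pi))) :
    φ = ψ := by
  have kφ : IsKink a n φ := ⟨⟨hφ, hφeq⟩, hφbot, hφtop⟩
  have kψ : IsKink a n ψ := ⟨⟨hψ, hψeq⟩, hψbot, hψtop⟩
  have hvalue : φ 0 = ψ 0 := (kψ.apply_zero_le ha hn kφ).antisymm (kφ.apply_zero_le ha hn kψ)
  have hvelocity : deriv φ 0 = deriv ψ 0 :=
    (kφ.deriv_zero_le ha hn kψ hvalue).antisymm (kψ.deriv_zero_le ha hn kφ hvalue.symm)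
  exact kφ.toIsKinkSolution.eq_of_eq_of_deriv_eq ha kψ.toIsKinkSolution hvalue hvelocity
end

section
/- Let a > 0 and let φ₁ : ℝ → ℝ be a 1-kink. Then φ₁ is strictly increasing on ℝ (φ₁'(r) > 0 for all r), and moreover φ₁(0) = π/2 and φ₁'(0) > √2. -/
open Real Filter

/-!
A `1`-kink is viewed as an orbit `(φ, φ')`. The energy `E = φ'² / 2 - sin² φ` is nonincreasing for
`r ≥ 0` and its limit at infinity is nonnegative, so `E ≥ 0` there; the reflection
`r ↦ π - φ (-r)` is again a kink and carries this to `r ≤ 0`. A zero of `E` would force `φ' = 0` and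
`sin φ = 0` at some point, making `φ` constant, so `E > 0`. Hence `φ'` never vanishes, and
`φ' 0 > √2` once `φ 0 = π / 2` is known.

For `φ 0 = π / 2`, the weighted energy `F = (r² + a²)² E` satisfies `F' = -4 r (r² + a²) sin² φ`,
which no longer involves `φ'`. For large `r` one has `r φ'(2 r) ≤ π - φ r ≤ 2 φ' r`; iterating this
shows that `φ'` decays superpolynomially, so `F` tends to `0`. If `φ 0 > π / 2`, then `φ` and its
reflection `ψ` have the same `F` at `0`. As long as `ψ < φ`, one has `sin² φ < sin² ψ` for `r > 0`,
so `F_ψ - F_φ` decreases, hence `ψ' < φ'` wherever `ψ` would catch up with `φ`. So `ψ < φ` for all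
`r ≥ 0`, and `F_ψ - F_φ` decreases strictly from `0` to its limit `0`, a contradiction.
-/

section Calculus

open Set Topology Asymptotics

theorem eq_of_hasDerivAt_of_lipschitzWith_of_second_order {E : Type*} [NormedAddCommGroup E]
    [NormedSpace ℝ E] {v : ℝ → E × E → E} {K : NNReal} (hv : ∀ t, LipschitzWith K (v t))
    {f p g q : ℝ → E} (hf : ∀ t, HasDerivAt f (p t) t)
    (hp : ∀ t, HasDerivAt p (v t (f t, p t)) t) (hg : ∀ t, HasDerivAt g (q t) t)
    (hq : ∀ t, HasDerivAt q (v t (g t, q t)) t) {t₀ : ℝ} (hfg : f t₀ = g t₀) (hpq : p t₀ = q t₀) :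
    f = g := by
  have hlip : ∀ t, LipschitzOnWith (max 1 K) (fun x : E × E => (x.2, v t x)) univ := fun t =>
    (LipschitzWith.prod_snd.prodMk (hv t)).lipschitzOnWith
  have heq : (fun t => (f t, p t)) = fun t => (g t, q t) :=
    ODE_solution_unique_univ (t₀ := t₀) hlip (fun t => ⟨(hf t).prodMk (hp t), mem_univ _⟩)
      (fun t => ⟨(hg t).prodMk (hq t), mem_univ _⟩) (Prod.ext hfg hpq)
  exact funext fun t => congrArg Prod.fst (congrFun heq t)

theorem pos_of_deriv_pos_at_first_zero {h : ℝ → ℝ} {x₀ : ℝ} (hc : ContinuousOn h (Ici x₀))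
    (h₀ : 0 < h x₀)
    (hcross : ∀ s > x₀, h s = 0 → (∀ x ∈ Ico x₀ s, 0 < h x) → 0 < deriv h s) :
    ∀ x ≥ x₀, 0 < h x := by
  have exists_zero : ∀ y ≥ x₀, h y ≤ 0 → ∃ z ∈ Icc x₀ y, h z = 0 := fun y hy hneg =>
    intermediate_value_Icc' hy (hc.mono Icc_subset_Ici_self) ⟨hneg, h₀.le⟩
  by_contra! ⟨x, hx, hneg⟩
  have hcompact : IsCompact (Icc x₀ x ∩ h ⁻¹' {0}) := isCompact_Icc.of_isClosed_subset
    ((hc.mono Icc_subset_Ici_self).preimage_isClosed_of_isClosed isClosed_Icc isClosed_singleton)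
    inter_subset_left
  obtain ⟨s, ⟨hs, hs_zero : h s = 0⟩, hs_least⟩ := hcompact.exists_isLeast (exists_zero x hx hneg)
  have hbefore : ∀ y ∈ Ico x₀ s, 0 < h y := by
    by_contra! ⟨y, hy, hy_neg⟩
    obtain ⟨z, hz, hz_zero⟩ := exists_zero y hy.1 hy_neg
    have hsz : s ≤ z := hs_least ⟨⟨hz.1, by linarith [hz.2, hy.2, hs.2]⟩, hz_zero⟩
    linarith [hz.2, hy.2]
  have hs₀ : x₀ < s := hs.1.lt_of_ne (by rintro rfl; exact h₀.ne' hs_zero)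
  have hsign := eventually_nhdsWithin_sign_eq_of_deriv_pos (hcross s hs₀ hs_zero hbefore) hs_zero
  obtain ⟨y, hy_sign, hy⟩ :=
    ((hsign.filter_mono nhdsWithin_le_nhds).and (Ioo_mem_nhdsLT hs₀)).exists
  rw [sign_pos (hbefore y ⟨hy.1.le, hy.2⟩), sign_neg (sub_neg.2 hy.2)] at hy_sign
  exact absurd hy_sign (by decide)

theorem mul_le_sub_of_antitoneOn_deriv {f p : ℝ → ℝ} {x y : ℝ}
    (hf : ∀ r ∈ Icc x y, HasDerivAt f (p r) r) (hp : AntitoneOn p (Icc x y)) (hxy : x ≤ y) :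
    p y * (y - x) ≤ f y - f x := by
  refine (convex_Icc x y).mul_sub_le_image_sub_of_le_deriv
    (fun r hr => (hf r hr).continuousAt.continuousWithinAt)
    (fun r hr => (hf r (interior_subset hr)).differentiableAt.differentiableWithinAt)
    (fun r hr => ?_) x (left_mem_Icc.2 hxy) y (right_mem_Icc.2 hxy) hxy
  have hr : r ∈ Icc x y := interior_subset hr
  rw [(hf r hr).deriv]
  exact hp hr (right_mem_Icc.2 hxy) hr.2

theorem tendsto_zero_of_antitoneOn_deriv {f p : ℝ → ℝ} {R L : ℝ}
    (hf : ∀ r ≥ R, HasDerivAt f (p r) r) (hp_nonneg : ∀ r ≥ R, 0 ≤ p r)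
    (hp : AntitoneOn p (Ici R)) (hlim : Tendsto f atTop (𝓝 L)) : Tendsto p atTop (𝓝 0) := by
  have hshift : Tendsto (fun r => f r - f (r - 1)) atTop (𝓝 0) := by
    simpa [sub_eq_add_neg] using
      hlim.sub (hlim.comp (tendsto_atTop_add_const_right atTop (-1 : ℝ) tendsto_id))
  refine squeeze_zero' (eventually_atTop.2 ⟨R, hp_nonneg⟩) ?_ hshift
  filter_upwards [eventually_ge_atTop (R + 1)] with r hr
  have hsub : Icc (r - 1) r ⊆ Ici R :=
    Icc_subset_Ici_self.trans (Ici_subset_Ici.2 (le_sub_iff_add_le.2 hr))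
  simpa using
    mul_le_sub_of_antitoneOn_deriv (fun s hs => hf s (hsub hs)) (hp.mono hsub) (sub_one_lt r).le

theorem superpolynomialDecay_of_mul_apply_two_mul_le {u : ℝ → ℝ} {C : ℝ}
    (hu : ∀ᶠ r in atTop, 0 ≤ u r) (hle : ∀ᶠ r in atTop, r * u (2 * r) ≤ C * u r)
    (hlim : Tendsto u atTop (𝓝 0)) :
    SuperpolynomialDecay atTop id u := by
  intro n
  induction n with
  | zero => simpa using hlim
  | succ n ih =>
    have hdouble : Tendsto (fun r => (2 * r) ^ (n + 1) * u (2 * r)) atTop (𝓝 0) := by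
      refine squeeze_zero' ?_ ?_ (by simpa using ih.const_mul (2 ^ (n + 1) * C))
      · filter_upwards [eventually_ge_atTop 0,
          (tendsto_id.const_mul_atTop two_pos).eventually hu] with r hr hu_double
        exact mul_nonneg (by positivity) hu_double
      · filter_upwards [hle, eventually_ge_atTop 0] with r hr hr₀
        calc (2 * r) ^ (n + 1) * u (2 * r) = 2 ^ (n + 1) * r ^ n * (r * u (2 * r)) := by ring
          _ ≤ 2 ^ (n + 1) * r ^ n * (C * u r) := by gcongr
          _ = 2 ^ (n + 1) * C * (r ^ n * u r) := by ring
    have hhalf : Tendsto (fun r : ℝ => r / 2) atTop atTop :=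
      tendsto_id.atTop_div_const two_pos
    refine (hdouble.comp hhalf).congr fun r => ?_
    simp only [Function.comp_apply, mul_div_cancel₀ r (two_ne_zero' ℝ), id]

end Calculus

section Trigonometry

theorem sin_two_mul_nonpos_of_mem_Icc {x : ℝ} (hx : x ∈ Set.Icc (π / 2) π) : sin (2 * x) ≤ 0 := by
  rw [sin_two_mul]
  have hsin : 0 ≤ sin x := sin_nonneg_of_nonneg_of_le_pi (by linarith [hx.1, pi_pos]) hx.2
  have hcos : cos x ≤ 0 := cos_nonpos_of_pi_div_two_le_of_le hx.1 (by linarith [hx.2, pi_pos])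
  exact mul_nonpos_of_nonneg_of_nonpos (mul_nonneg zero_le_two hsin) hcos

theorem pi_sub_le_two_mul_sin {x : ℝ} (hx : x ∈ Set.Icc (π / 2) π) : π - x ≤ 2 * sin x := by
  have hjordan : 2 / π * (π - x) ≤ sin (π - x) :=
    mul_le_sin (by linarith [hx.2]) (by linarith [hx.1])
  rw [sin_pi_sub, div_mul_eq_mul_div, div_le_iff₀ pi_pos] at hjordan
  have hsin : 0 ≤ sin x := sin_nonneg_of_nonneg_of_le_pi (by linarith [hx.1, pi_pos]) hx.2
  nlinarith [pi_le_four]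

theorem sin_sq_lt_sin_sq_of_lt_of_pi_lt_add {x y : ℝ} (hxy : x < y) (hadd : π < x + y)
    (hy : y ≤ π) : sin y ^ 2 < sin x ^ 2 := by
  have hfactor : sin x ^ 2 - sin y ^ 2 = sin (x - y) * sin (x + y - 2 * π) := by
    rw [sin_sub_two_pi, sin_sub, sin_add]
    linear_combination sin y ^ 2 * sin_sq_add_cos_sq x - sin x ^ 2 * sin_sq_add_cos_sq y
  have hsub : sin (x - y) < 0 := sin_neg_of_neg_of_neg_pi_lt (by linarith) (by linarith)
  have hsum : sin (x + y - 2 * π) < 0 := sin_neg_of_neg_of_neg_pi_lt (by linarith) (by linarith)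
  linarith [mul_pos_of_neg_of_neg hsub hsum]

theorem lipschitzWith_sin_two_mul_sub_mul (c : ℝ) :
    LipschitzWith (2 + ‖c‖₊) (fun x : ℝ × ℝ => sin (2 * x.1) - c * x.2) := by
  have hsin : LipschitzWith 2 fun x : ℝ × ℝ => sin (2 * x.1) := by
    simpa [Function.comp_def] using!
      lipschitzWith_sin.comp ((lipschitzWith_smul (2 : ℝ)).comp LipschitzWith.prod_fst)
  have hmul : LipschitzWith ‖c‖₊ fun x : ℝ × ℝ => c * x.2 := by
    simpa [Function.comp_def] using! (lipschitzWith_smul c).comp LipschitzWith.prod_snd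
  exact hsin.sub hmul

end Trigonometry

namespace Wormhole

open Set Topology Asymptotics

/-- `f` solves the wormhole kink equation with throat radius `a`. The derivative `p` of `f` is
carried along, so that the equation reads as a first-order system. -/
structure IsSolution (a : ℝ) (f p : ℝ → ℝ) : Prop where
  hasDerivAt : ∀ r, HasDerivAt f (p r) r
  hasDerivAt_deriv : ∀ r, HasDerivAt p (sin (2 * f r) - 2 * r / (r ^ 2 + a ^ 2) * p r) r

/-- `f`, with derivative `p`, is a `1`-kink: a solution connecting the equilibria `0` and `π`. -/
structure IsKink (a : ℝ) (f p : ℝ → ℝ) : Prop extends IsSolution a f p where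
  tendsto_atBot : Tendsto f atBot (𝓝 0)
  tendsto_atTop : Tendsto f atTop (𝓝 π)

/-- The mechanical energy `f'² / 2 - sin² f`, where `p` stands for `f'`; it is conserved up to the
damping term of the kink equation. -/
noncomputable def energy (f p : ℝ → ℝ) (r : ℝ) : ℝ := p r ^ 2 / 2 - sin (f r) ^ 2

/-- The energy multiplied by `(r² + a²)²`, the weight for which the damping term drops out of its
derivative. -/
noncomputable def weightedEnergy (a : ℝ) (f p : ℝ → ℝ) (r : ℝ) : ℝ :=
  (r ^ 2 + a ^ 2) ^ 2 * energy f p r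

variable {a : ℝ} {f p g q : ℝ → ℝ}

theorem abs_damping_le (ha : 0 < a) (r : ℝ) : |2 * r / (r ^ 2 + a ^ 2)| ≤ 1 / a := by
  rw [abs_div, abs_mul, abs_two, abs_of_pos (by positivity : 0 < r ^ 2 + a ^ 2),
    div_le_div_iff₀ (by positivity) ha, ← sq_abs r]
  nlinarith [sq_nonneg (|r| - a)]

namespace IsSolution

theorem continuous (h : IsSolution a f p) : Continuous f :=
  continuous_iff_continuousAt.2 fun r => (h.hasDerivAt r).continuousAt

theorem continuous_deriv (h : IsSolution a f p) : Continuous p :=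
  continuous_iff_continuousAt.2 fun r => (h.hasDerivAt_deriv r).continuousAt

theorem const {c : ℝ} (hc : sin c = 0) : IsSolution a (fun _ => c) (fun _ => 0) where
  hasDerivAt r := hasDerivAt_const r c
  hasDerivAt_deriv r := by simpa [sin_two_mul, hc] using hasDerivAt_const r (0 : ℝ)

theorem reflect (h : IsSolution a f p) :
    IsSolution a (fun r => π - f (-r)) (fun r => p (-r)) where
  hasDerivAt r := by
    simpa using ((h.hasDerivAt (-r)).comp r (hasDerivAt_neg r)).const_sub π
  hasDerivAt_deriv r := by
    refine ((h.hasDerivAt_deriv (-r)).comp r (hasDerivAt_neg r)).congr_deriv ?_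
    rw [mul_sub, sin_two_pi_sub]
    ring

theorem unique (ha : 0 < a) (hf : IsSolution a f p) (hg : IsSolution a g q) {r₀ : ℝ}
    (hfg : f r₀ = g r₀) (hpq : p r₀ = q r₀) : f = g := by
  have hlip (r : ℝ) : LipschitzWith (2 + ‖1 / a‖₊)
      fun x : ℝ × ℝ => sin (2 * x.1) - 2 * r / (r ^ 2 + a ^ 2) * x.2 := by
    refine (lipschitzWith_sin_two_mul_sub_mul _).weaken (add_le_add_right ?_ 2)
    rw [← NNReal.coe_le_coe, coe_nnnorm, coe_nnnorm]
    exact (abs_damping_le ha r).trans (le_abs_self _)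
  exact eq_of_hasDerivAt_of_lipschitzWith_of_second_order hlip hf.hasDerivAt hf.hasDerivAt_deriv
    hg.hasDerivAt hg.hasDerivAt_deriv hfg hpq

theorem hasDerivAt_energy (h : IsSolution a f p) (r : ℝ) :
    HasDerivAt (energy f p) (-(2 * r / (r ^ 2 + a ^ 2)) * p r ^ 2) r := by
  refine ((((h.hasDerivAt_deriv r).pow 2).div_const 2).sub
    ((h.hasDerivAt r).sin.pow 2)).congr_deriv ?_
  rw [sin_two_mul]
  ring

theorem antitoneOn_energy (h : IsSolution a f p) : AntitoneOn (energy f p) (Ici 0) := by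
  refine antitoneOn_of_hasDerivWithinAt_nonpos (convex_Ici 0)
    (fun r _ => (h.hasDerivAt_energy r).continuousAt.continuousWithinAt)
    (fun r _ => (h.hasDerivAt_energy r).hasDerivWithinAt) fun r hr => ?_
  have hr : 0 < r := by simpa using hr
  rw [neg_mul, neg_nonpos]
  positivity

theorem hasDerivAt_weightedEnergy (ha : 0 < a) (h : IsSolution a f p) (r : ℝ) :
    HasDerivAt (weightedEnergy a f p) (-(4 * r * (r ^ 2 + a ^ 2)) * sin (f r) ^ 2) r := by
  have hweight : HasDerivAt (fun r : ℝ => (r ^ 2 + a ^ 2) ^ 2) (4 * r * (r ^ 2 + a ^ 2)) r := by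
    refine (((hasDerivAt_pow 2 r).add_const (a ^ 2)).pow 2).congr_deriv ?_
    ring
  refine (hweight.mul (h.hasDerivAt_energy r)).congr_deriv ?_
  have hne : r ^ 2 + a ^ 2 ≠ 0 := by positivity
  rw [energy]
  field_simp
  ring

end IsSolution

theorem energy_reflect (r : ℝ) :
    energy (fun r => π - f (-r)) (fun r => p (-r)) r = energy f p (-r) := by
  simp only [energy, sin_pi_sub]

namespace IsKink

theorem reflect (h : IsKink a f p) : IsKink a (fun r => π - f (-r)) (fun r => p (-r)) where
  toIsSolution := h.toIsSolution.reflect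
  tendsto_atBot := by simpa using (h.tendsto_atTop.comp tendsto_neg_atBot_atTop).const_sub π
  tendsto_atTop := by simpa using (h.tendsto_atBot.comp tendsto_neg_atTop_atBot).const_sub π

theorem deriv_ne_zero_of_sin_eq_zero (ha : 0 < a) (h : IsKink a f p) {r : ℝ}
    (hsin : sin (f r) = 0) : p r ≠ 0 := by
  intro hp
  have hconst : f = fun _ => f r := h.toIsSolution.unique ha (.const hsin) rfl hp
  have hbot : f r = 0 := tendsto_nhds_unique tendsto_const_nhds (hconst ▸ h.tendsto_atBot)
  have htop : f r = π := tendsto_nhds_unique tendsto_const_nhds (hconst ▸ h.tendsto_atTop)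
  exact pi_ne_zero (htop.symm.trans hbot)

theorem energy_nonneg_of_nonneg (h : IsKink a f p) {r : ℝ} (hr : 0 ≤ r) : 0 ≤ energy f p r := by
  have hlim : Tendsto (fun s => -sin (f s) ^ 2) atTop (𝓝 0) := by
    simpa using (((continuous_sin.tendsto π).comp h.tendsto_atTop).pow 2).neg
  refine le_of_tendsto hlim ?_
  filter_upwards [eventually_ge_atTop r] with s hs
  calc -sin (f s) ^ 2 ≤ energy f p s := by
        rw [energy]
        linarith [sq_nonneg (p s)]
    _ ≤ energy f p r := h.antitoneOn_energy hr (hr.trans hs) hs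

theorem energy_nonneg (h : IsKink a f p) (r : ℝ) : 0 ≤ energy f p r := by
  rcases le_total 0 r with hr | hr
  · exact h.energy_nonneg_of_nonneg hr
  · simpa [energy_reflect] using h.reflect.energy_nonneg_of_nonneg (neg_nonneg.2 hr)

theorem energy_pos_of_pos (ha : 0 < a) (h : IsKink a f p) {r : ℝ} (hr : 0 < r) :
    0 < energy f p r := by
  refine (h.energy_nonneg r).lt_of_ne' fun hzero => ?_
  have hmin : IsLocalMin (energy f p) r := .of_forall fun s => hzero ▸ h.energy_nonneg s
  have hderiv := hmin.hasDerivAt_eq_zero (h.hasDerivAt_energy r)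
  have hp : p r = 0 := by
    have hdamping : 2 * r / (r ^ 2 + a ^ 2) ≠ 0 := by positivity
    simpa [hdamping] using hderiv
  have hsin : sin (f r) = 0 := by simpa [energy, hp] using hzero
  exact h.deriv_ne_zero_of_sin_eq_zero ha hsin hp

theorem energy_pos_of_nonneg (ha : 0 < a) (h : IsKink a f p) {r : ℝ} (hr : 0 ≤ r) :
    0 < energy f p r :=
  (h.energy_pos_of_pos ha (by linarith : 0 < r + 1)).trans_le
    (h.antitoneOn_energy hr (mem_Ici.2 (by linarith)) (by linarith))

theorem energy_pos (ha : 0 < a) (h : IsKink a f p) (r : ℝ) : 0 < energy f p r := by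
  rcases le_total 0 r with hr | hr
  · exact h.energy_pos_of_nonneg ha hr
  · simpa [energy_reflect] using h.reflect.energy_pos_of_nonneg ha (neg_nonneg.2 hr)

theorem two_mul_sin_sq_lt_deriv_sq (ha : 0 < a) (h : IsKink a f p) (r : ℝ) :
    2 * sin (f r) ^ 2 < p r ^ 2 := by
  have hE := h.energy_pos ha r
  rw [energy] at hE
  linarith

theorem deriv_ne_zero (ha : 0 < a) (h : IsKink a f p) (r : ℝ) : p r ≠ 0 := fun hp => by
  have hlt := h.two_mul_sin_sq_lt_deriv_sq ha r
  rw [hp] at hlt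
  linarith [sq_nonneg (sin (f r))]

theorem deriv_pos (ha : 0 < a) (h : IsKink a f p) (r : ℝ) : 0 < p r := by
  by_contra! hr
  have hneg : ∀ s, p s ≤ 0 := by
    by_contra! ⟨s, hs⟩
    obtain ⟨x, hx⟩ := mem_range_of_exists_le_of_exists_ge h.continuous_deriv ⟨r, hr⟩ ⟨s, hs.le⟩
    exact h.deriv_ne_zero ha x hx
  have hanti : Antitone f := antitone_of_hasDerivAt_nonpos h.hasDerivAt hneg
  linarith [hanti.ge_of_tendsto h.tendsto_atBot 0, hanti.le_of_tendsto h.tendsto_atTop 0, pi_pos]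

theorem strictMono (ha : 0 < a) (h : IsKink a f p) : StrictMono f :=
  strictMono_of_hasDerivAt_pos h.hasDerivAt (h.deriv_pos ha)

theorem le_pi (ha : 0 < a) (h : IsKink a f p) (r : ℝ) : f r ≤ π :=
  (h.strictMono ha).monotone.ge_of_tendsto h.tendsto_atTop r

theorem exists_forall_ge_mem_Icc (ha : 0 < a) (h : IsKink a f p) :
    ∃ R, 0 ≤ R ∧ ∀ r ≥ R, f r ∈ Icc (π / 2) π := by
  obtain ⟨R, hR⟩ := eventually_atTop.1
    (h.tendsto_atTop.eventually (le_mem_nhds (by linarith [pi_pos] : π / 2 < π)))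
  exact ⟨max R 0, le_max_right _ _, fun r hr => ⟨hR r ((le_max_left _ _).trans hr), h.le_pi ha r⟩⟩

theorem antitoneOn_deriv (ha : 0 < a) (h : IsKink a f p) {R : ℝ} (hR : 0 ≤ R)
    (hfR : ∀ r ≥ R, f r ∈ Icc (π / 2) π) : AntitoneOn p (Ici R) := by
  refine antitoneOn_of_hasDerivWithinAt_nonpos (convex_Ici R) h.continuous_deriv.continuousOn
    (fun r _ => (h.hasDerivAt_deriv r).hasDerivWithinAt) fun r hr => ?_
  have hr : R ≤ r := interior_subset hr
  have hr₀ : 0 ≤ r := hR.trans hr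
  have hp : 0 < p r := h.deriv_pos ha r
  have hdamping : 0 ≤ 2 * r / (r ^ 2 + a ^ 2) * p r := by positivity
  linarith [sin_two_mul_nonpos_of_mem_Icc (hfR r hr)]

theorem pi_sub_le_two_mul_deriv (ha : 0 < a) (h : IsKink a f p) {r : ℝ}
    (hr : f r ∈ Icc (π / 2) π) : π - f r ≤ 2 * p r := by
  have hsin : sin (f r) ≤ p r := abs_le_of_sq_le_sq' (by
    linarith [h.two_mul_sin_sq_lt_deriv_sq ha r, sq_nonneg (sin (f r))]) (h.deriv_pos ha r).le |>.2
  linarith [pi_sub_le_two_mul_sin hr]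

theorem superpolynomialDecay_deriv (ha : 0 < a) (h : IsKink a f p) :
    SuperpolynomialDecay atTop id p := by
  obtain ⟨R, hR, hfR⟩ := h.exists_forall_ge_mem_Icc ha
  have hanti : AntitoneOn p (Ici R) := h.antitoneOn_deriv ha hR hfR
  have hnonneg (r : ℝ) : 0 ≤ p r := (h.deriv_pos ha r).le
  refine superpolynomialDecay_of_mul_apply_two_mul_le (C := 2) (.of_forall hnonneg) ?_
    (tendsto_zero_of_antitoneOn_deriv (fun r _ => h.hasDerivAt r) (fun r _ => hnonneg r) hanti
      h.tendsto_atTop)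
  filter_upwards [eventually_ge_atTop R] with r hr
  calc r * p (2 * r) = p (2 * r) * (2 * r - r) := by ring
    _ ≤ f (2 * r) - f r :=
      mul_le_sub_of_antitoneOn_deriv (fun s _ => h.hasDerivAt s)
        (hanti.mono (Icc_subset_Ici_self.trans (Ici_subset_Ici.2 hr))) (by linarith)
    _ ≤ π - f r := by linarith [h.le_pi ha (2 * r)]
    _ ≤ 2 * p r := h.pi_sub_le_two_mul_deriv ha (hfR r hr)

theorem tendsto_weightedEnergy_atTop (ha : 0 < a) (h : IsKink a f p) :
    Tendsto (weightedEnergy a f p) atTop (𝓝 0) := by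
  have hdecay := h.superpolynomialDecay_deriv ha
  have hmul : Tendsto (fun r => (r ^ 2 + a ^ 2) * p r) atTop (𝓝 0) := by
    simpa [add_mul] using (hdecay 2).add ((hdecay 0).const_mul (a ^ 2))
  refine squeeze_zero (fun r => ?_) (fun r => ?_)
    (by simpa using (hmul.pow 2).div_const 2)
  · exact mul_nonneg (by positivity) (h.energy_nonneg r)
  · calc weightedEnergy a f p r ≤ (r ^ 2 + a ^ 2) ^ 2 * (p r ^ 2 / 2) := by
          rw [weightedEnergy, energy]
          gcongr
          linarith [sq_nonneg (sin (f r))]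
      _ = ((r ^ 2 + a ^ 2) * p r) ^ 2 / 2 := by ring

theorem strictAntiOn_weightedEnergy_sub (ha : 0 < a) (hf : IsKink a f p) (hg : IsKink a g q)
    (hadd : π ≤ f 0 + g 0) {s : ℝ} (hlt : ∀ r ∈ Ioo 0 s, g r < f r) :
    StrictAntiOn (fun r => weightedEnergy a g q r - weightedEnergy a f p r) (Icc 0 s) := by
  have hderiv (r : ℝ) :=
    (hg.hasDerivAt_weightedEnergy ha r).sub (hf.hasDerivAt_weightedEnergy ha r)
  refine strictAntiOn_of_hasDerivWithinAt_neg (convex_Icc 0 s)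
    (fun r _ => (hderiv r).continuousAt.continuousWithinAt)
    (fun r _ => (hderiv r).hasDerivWithinAt) fun r hr => ?_
  rw [interior_Icc] at hr
  have hsin : sin (f r) ^ 2 < sin (g r) ^ 2 :=
    sin_sq_lt_sin_sq_of_lt_of_pi_lt_add (hlt r hr)
      (by linarith [hf.strictMono ha hr.1, hg.strictMono ha hr.1]) (hf.le_pi ha r)
  have hweight : 0 < 4 * r * (r ^ 2 + a ^ 2) := by have := hr.1; positivity
  linarith [mul_lt_mul_of_pos_left hsin hweight]

theorem lt_of_weightedEnergy_zero_le (ha : 0 < a) (hf : IsKink a f p) (hg : IsKink a g q)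
    (hadd : π ≤ f 0 + g 0) (hlt : g 0 < f 0)
    (hle : weightedEnergy a g q 0 ≤ weightedEnergy a f p 0) : ∀ r ≥ 0, g r < f r := by
  suffices hpos : ∀ r ≥ 0, 0 < (f - g) r from fun r hr => sub_pos.1 (hpos r hr)
  refine pos_of_deriv_pos_at_first_zero (hf.continuous.sub hg.continuous).continuousOn
    (sub_pos.2 hlt) fun s hs hcross hbefore => ?_
  rw [((hf.hasDerivAt s).sub (hg.hasDerivAt s)).deriv, sub_pos]
  have hanti := hf.strictAntiOn_weightedEnergy_sub ha hg hadd
    fun r hr => sub_pos.1 (hbefore r (Ioo_subset_Ico_self hr))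
  have hF : weightedEnergy a g q s < weightedEnergy a f p s := by
    linarith [hanti (left_mem_Icc.2 hs.le) (right_mem_Icc.2 hs.le) hs]
  have hE : energy g q s < energy f p s := lt_of_mul_lt_mul_left hF (by positivity)
  have hsq : q s ^ 2 < p s ^ 2 := by
    rw [energy, energy, sub_eq_zero.1 hcross] at hE
    linarith
  exact lt_of_pow_lt_pow_left₀ 2 (hf.deriv_pos ha s).le hsq

theorem weightedEnergy_zero_lt (ha : 0 < a) (hf : IsKink a f p) (hg : IsKink a g q)
    (hadd : π ≤ f 0 + g 0) (hlt : g 0 < f 0) :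
    weightedEnergy a f p 0 < weightedEnergy a g q 0 := by
  by_contra! hle
  have hanti (s : ℝ) := hf.strictAntiOn_weightedEnergy_sub ha hg hadd (s := s) fun r hr =>
    hf.lt_of_weightedEnergy_zero_le ha hg hadd hlt hle r hr.1.le
  have hneg : weightedEnergy a g q 1 - weightedEnergy a f p 1 < 0 := by
    linarith [hanti 1 (left_mem_Icc.2 zero_le_one) (right_mem_Icc.2 zero_le_one) one_pos]
  have hlim : Tendsto (fun r => weightedEnergy a g q r - weightedEnergy a f p r) atTop (𝓝 0) := by
    simpa using (hg.tendsto_weightedEnergy_atTop ha).sub (hf.tendsto_weightedEnergy_atTop ha)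
  refine hneg.not_ge (le_of_tendsto hlim ?_)
  filter_upwards [eventually_ge_atTop 1] with r hr
  have hr₀ : 0 ≤ r := zero_le_one.trans hr
  exact (hanti r).antitoneOn ⟨zero_le_one, hr⟩ (right_mem_Icc.2 hr₀) hr

theorem apply_zero_le_pi_div_two (ha : 0 < a) (h : IsKink a f p) : f 0 ≤ π / 2 := by
  by_contra! hgt
  refine (h.weightedEnergy_zero_lt ha h.reflect ?_ ?_).ne ?_
  · simp
  · simp only [neg_zero]
    linarith
  · simp only [weightedEnergy, energy_reflect, neg_zero]

theorem apply_zero (ha : 0 < a) (h : IsKink a f p) : f 0 = π / 2 := by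
  have hreflect : π - f 0 ≤ π / 2 := by simpa using h.reflect.apply_zero_le_pi_div_two ha
  linarith [h.apply_zero_le_pi_div_two ha]

theorem sqrt_two_lt_deriv_zero (ha : 0 < a) (h : IsKink a f p) : √2 < p 0 := by
  rw [sqrt_lt' (h.deriv_pos ha 0)]
  simpa [h.apply_zero ha] using h.two_mul_sin_sq_lt_deriv_sq ha 0

end IsKink

end Wormhole

/-- Any `1`-kink `φ₁` is strictly increasing (`φ₁'(r) > 0` for all `r`), with
`φ₁(0) = π/2` and `φ₁'(0) > √2`. -/
theorem one_kink_monotone (a : ℝ) (ha : 0 < a) (φ₁ : ℝ → ℝ)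
    (hφ : ContDiff ℝ 2 φ₁)
    (hφeq : ∀ r : ℝ, deriv (deriv φ₁) r + (2 * r / (r ^ 2 + a ^ 2)) * deriv φ₁ r
        = Real.sin (2 * φ₁ r))
    (hbot : Tendsto φ₁ atBot (nhds 0))
    (htop : Tendsto φ₁ atTop (nhds Real.pi)) :
    (∀ r : ℝ, 0 < deriv φ₁ r) ∧ φ₁ 0 = Real.pi / 2 ∧ Real.sqrt 2 < deriv φ₁ 0 := by
  have hkink : Wormhole.IsKink a φ₁ (deriv φ₁) :=
    { hasDerivAt := fun r => (hφ.differentiable two_ne_zero r).hasDerivAt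
      hasDerivAt_deriv := fun r =>
        (hφ.differentiable_deriv_two r).hasDerivAt.congr_deriv (eq_sub_of_add_eq (hφeq r))
      tendsto_atBot := hbot
      tendsto_atTop := htop }
  exact ⟨hkink.deriv_pos ha, hkink.apply_zero ha, hkink.sqrt_two_lt_deriv_zero ha⟩
end
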